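/- The set of positive integers n possessing two divisors d and d′ with d < d′ < 2d has natural density 1. -/

import Mathlib

open Filter Topology
open scoped Classical

/-- Number of elements of `S` in `[1, N]`. -/
noncomputable def countIn (S : Set ℕ) (N : ℕ) : ℕ :=
  ((Finset.Icc 1 N).filter (fun n => n ∈ S)).card

/-- `S` has natural density `d`. -/
def HasDensity (S : Set ℕ) (d : ℝ) : Prop :=
  Tendsto (fun N : ℕ => (countIn S N : ℝ) / N) atTop (nhds d)

/-!
The integers with close divisors are found by independent blocks of primes. A block is a modulus `P`, all of whose prime factors exceed a prescribed bound,
such that a fixed positive proportion `c` of the residues `x` modulo `P` have two divisors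
`d < d' < 2 d` of `gcd x P` (`exists_block`). Blocks on increasing scales are coprime, so by the
Chinese remainder theorem the integers missed by `r` of them have proportion at most `(1 - c) ^ r`
(`exists_sum_not_closeDivisors_le`), and `r` is arbitrary.

To build a block, the primes with logarithm beyond `L₀` are divided into cells
`L < log p ≤ 1.001 ^ 10 L`, and from each cell that contains a prime factor of `x` one such prime is
picked. A cell is inhabited with probability about `0.00995`, so up to scale `Λ` about
`log (Λ / L₀)` primes are picked. Their logarithms, with coefficients `-1, 0, 1`, give
`3 ^ log (Λ / L₀)` sums `log d - log d'` of size `O(Λ)`; since `3 > e`, these should fill a positive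
proportion of the unit intervals up to `Λ`. This is proved by a second moment: it is enough that the
proportion of pairs of sums at distance at most `1` is `O(1 / Λ)` for at least half of the residues
`x`. Adjoining a cell divides the old collisions by `3`, if the cell is inhabited, and creates new
ones with proportion `O(1 / L)`, because a prime of size `exp L` has its logarithm in a given bounded
window with probability `O(1 / L)`. The average number of collisions is too large for this to close,
as it is dominated by `x` with few prime factors, but a moment of order `1 / 10` works; it is encoded
by writing the bound as a product `H * Z ^ 9` and controlling the averages of `H` and `Z`
(`signedSums_step`). The recursion contracts, so the constant `h` in the final bound does not depend
on `L₀` (`signedSums_exists`), and Cauchy–Schwarz gives many integer parts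
(`SignedSums.sum_manyRatios`).

Finally the ratios are bridged: with `R = 200 Λ`, choose a prime factor `b` of `x` with
`7 R < log b ≤ (7 + ε) R` and a prime factor `a` with `5 R < log a ≤ 7 R` such that
`log b - log a` is within `0.55 < log 2` of one of the `≫ Λ` well spaced values `log d - log d'`. The
reciprocal sum over the admissible `a` is bounded below (`sum_inv_bridge_ge`), so this succeeds with
positive probability, and then `a d` and `b d'` are different divisors of `x` whose ratio lies
between `1 / 2` and `2`. The input on primes is Chebyshev's bounds and Mertens' first theorem.
-/

/-! ### Primes on a logarithmic scale -/

/-- The primes `p` with `L < log p ≤ U`. -/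
noncomputable def primesIn (L U : ℝ) : Finset ℕ :=
  (Finset.Ioc 0 ⌊Real.exp U⌋₊).filter (fun p => p.Prime ∧ L < Real.log p)

lemma mem_primesIn {L U : ℝ} {p : ℕ} :
    p ∈ primesIn L U ↔ p.Prime ∧ L < Real.log p ∧ Real.log p ≤ U := by
  unfold primesIn
  rw [Finset.mem_filter, Finset.mem_Ioc]
  constructor
  · rintro ⟨⟨h0, h1⟩, hp, hL⟩
    refine ⟨hp, hL, ?_⟩
    rw [Real.log_le_iff_le_exp (by exact_mod_cast h0)]
    exact (Nat.le_floor_iff (Real.exp_pos _).le).1 h1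
  · rintro ⟨hp, hL, hU⟩
    refine ⟨⟨hp.pos, ?_⟩, hp, hL⟩
    rw [Real.log_le_iff_le_exp (by exact_mod_cast hp.pos)] at hU
    exact (Nat.le_floor_iff (Real.exp_pos _).le).2 hU

lemma sum_primesIn_add {L U : ℝ} (h : L ≤ U) (g : ℕ → ℝ) :
    ∑ p ∈ primesIn L U, g p + ∑ p ∈ (Finset.Ioc 0 ⌊Real.exp L⌋₊).filter Nat.Prime, g p
      = ∑ p ∈ (Finset.Ioc 0 ⌊Real.exp U⌋₊).filter Nat.Prime, g p := by
  have hle : ⌊Real.exp L⌋₊ ≤ ⌊Real.exp U⌋₊ := Nat.floor_le_floor (Real.exp_le_exp.2 h)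
  rw [← Finset.sum_union]
  · apply Finset.sum_congr _ (fun _ _ => rfl)
    ext p
    simp only [Finset.mem_union, mem_primesIn, Finset.mem_filter, Finset.mem_Ioc]
    constructor
    · rintro (⟨hp, _, hU⟩ | ⟨⟨h0, h1⟩, hp⟩)
      · refine ⟨⟨hp.pos, ?_⟩, hp⟩
        rw [Real.log_le_iff_le_exp (by exact_mod_cast hp.pos)] at hU
        exact (Nat.le_floor_iff (Real.exp_pos _).le).2 hU
      · exact ⟨⟨h0, h1.trans hle⟩, hp⟩
    · rintro ⟨⟨h0, h1⟩, hp⟩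
      by_cases hL : L < Real.log p
      · left
        refine ⟨hp, hL, ?_⟩
        rw [Real.log_le_iff_le_exp (by exact_mod_cast h0)]
        exact (Nat.le_floor_iff (Real.exp_pos _).le).1 h1
      · right
        refine ⟨⟨h0, ?_⟩, hp⟩
        push Not at hL
        rw [Real.log_le_iff_le_exp (by exact_mod_cast h0)] at hL
        exact (Nat.le_floor_iff (Real.exp_pos _).le).2 hL
  · rw [Finset.disjoint_left]
    intro p hp hp'
    rw [mem_primesIn] at hp
    simp only [Finset.mem_filter, Finset.mem_Ioc] at hp'
    have := (Nat.le_floor_iff (Real.exp_pos _).le).1 hp'.1.2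
    rw [← Real.log_le_iff_le_exp (by exact_mod_cast hp'.1.1)] at this
    linarith [hp.2.1]

/-- An upper bound for the reciprocal sum over primes in a short logarithmic window, from
Chebyshev's bound `θ x ≤ x log 4`. -/
lemma sum_inv_window_le {L u : ℝ} (hL : 0 < L) (S : Finset ℕ)
    (hS : ∀ p ∈ S, p.Prime ∧ L ≤ Real.log p ∧ u ≤ Real.log p ∧ Real.log p ≤ u + 2) :
    ∑ p ∈ S, (1 / p : ℝ) ≤ 12 / L := by
  have he : 0 < Real.exp u := Real.exp_pos u
  have h1 : ∀ p ∈ S, (1 / p : ℝ) ≤ Real.log p * (1 / (L * Real.exp u)) := by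
    intro p hp
    obtain ⟨hpp, h1, h2, h3⟩ := hS p hp
    have hp0 : (0 : ℝ) < p := by exact_mod_cast hpp.pos
    have h4 : Real.exp u ≤ p := by rwa [← Real.le_log_iff_exp_le hp0]
    rw [mul_one_div]
    rw [div_le_div_iff₀ hp0 (by positivity)]
    have : L * Real.exp u ≤ Real.log p * p := mul_le_mul h1 h4 he.le (by linarith)
    linarith
  have h2 : ∑ p ∈ S, Real.log p ≤ Chebyshev.theta (Real.exp (u + 2)) := by
    unfold Chebyshev.theta
    apply Finset.sum_le_sum_of_subset_of_nonneg
    · intro p hp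
      obtain ⟨hpp, h1, h2, h3⟩ := hS p hp
      simp only [Finset.mem_filter, Finset.mem_Ioc]
      refine ⟨⟨hpp.pos, ?_⟩, hpp⟩
      rw [Real.log_le_iff_le_exp (by exact_mod_cast hpp.pos)] at h3
      exact (Nat.le_floor_iff (Real.exp_pos _).le).2 h3
    · intro p _ _
      exact Real.log_natCast_nonneg p
  have h3 := Chebyshev.theta_le_log4_mul_x (Real.exp_pos (u + 2)).le
  have h4 : Real.log 4 ≤ 1.4 := by
    have : Real.log 4 = 2 * Real.log 2 := by
      rw [show (4 : ℝ) = 2 ^ 2 by norm_num, Real.log_pow]; norm_num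
    rw [this]; linarith [Real.log_two_lt_d9]
  have h5 : Real.exp 2 ≤ 7.5 := by
    have : Real.exp 2 = Real.exp 1 * Real.exp 1 := by rw [← Real.exp_add]; norm_num
    rw [this]; nlinarith [Real.exp_one_lt_d9, Real.exp_pos 1]
  calc ∑ p ∈ S, (1 / p : ℝ) ≤ ∑ p ∈ S, Real.log p * (1 / (L * Real.exp u)) :=
        Finset.sum_le_sum h1
    _ = (∑ p ∈ S, Real.log p) * (1 / (L * Real.exp u)) := by rw [Finset.sum_mul]
    _ ≤ (12 * Real.exp u) * (1 / (L * Real.exp u)) := by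
        apply mul_le_mul_of_nonneg_right _ (by positivity)
        rw [Real.exp_add] at h2 h3
        have : Real.log 4 * (Real.exp u * Real.exp 2) ≤ 1.4 * (Real.exp u * 7.5) := by
          gcongr
        linarith
    _ = 12 / L := by field_simp

/-- A logarithmic window of length `1.1 > log 3` far out contains primes of substantial reciprocal
sum: Chebyshev's bounds give `θ (3 x) - θ x ≥ x / 2` for large `x`. -/
lemma sum_inv_window_ge : ∃ u₀ : ℝ, 0 < u₀ ∧ ∀ u ≥ u₀,
    1 / (12 * u) ≤ ∑ p ∈ primesIn u (u + 1.1), (1 / p : ℝ) := by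
  have hev : ∀ᶠ u : ℝ in atTop, Real.log 2 + Real.log (3 * Real.exp u + 2) +
      2 * √(3 * Real.exp u) * Real.log (3 * Real.exp u) ≤ (1 / 10) * Real.exp u := by
    have h3 : (fun x : ℝ => Real.log 2 + Real.log (3 * x + 2) + 2 * √(3 * x) * Real.log (3 * x))
        =o[atTop] (fun x : ℝ => x) := by
      have hx : Tendsto (fun x : ℝ => 3 * x) atTop atTop :=
        tendsto_id.const_mul_atTop (by norm_num)
      have hx2 : Tendsto (fun x : ℝ => 3 * x + 2) atTop atTop :=
        tendsto_atTop_add_const_right _ _ hx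
      have e1 : (fun x : ℝ => 3 * x + 2) =O[atTop] (fun x : ℝ => x) := by
        apply Asymptotics.IsBigO.of_bound 5
        filter_upwards [eventually_ge_atTop 1] with x hx
        rw [Real.norm_of_nonneg (by linarith), Real.norm_of_nonneg (by linarith)]
        linarith
      have e2 : (fun x : ℝ => 3 * x) =O[atTop] (fun x : ℝ => x) :=
        (Asymptotics.isBigO_refl _ _).const_mul_left 3
      have c1 : (fun _ : ℝ => Real.log 2) =o[atTop] (fun x : ℝ => x) :=
        Asymptotics.isLittleO_const_id_atTop _
      have c2 := (Real.isLittleO_log_id_atTop.comp_tendsto hx2).trans_isBigO e1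
      have c3 : (fun x : ℝ => √x * Real.log x) =o[atTop] (fun x : ℝ => x) := by
        have := (isLittleO_log_rpow_atTop (r := 1 / 2) (by norm_num))
        have := (Asymptotics.isBigO_refl (fun x : ℝ => √x) atTop).mul_isLittleO this
        apply this.congr' (EventuallyEq.rfl)
        filter_upwards [eventually_ge_atTop 0] with x hx
        rw [← Real.sqrt_eq_rpow, Real.mul_self_sqrt hx]
      have c4 := ((c3.comp_tendsto hx).trans_isBigO e2).const_mul_left 2
      refine ((c1.add c2).add c4).congr_left ?_
      intro x
      simp only [Function.comp]
      ring
    have := (h3.comp_tendsto Real.tendsto_exp_atTop).bound (c := 1 / 10) (by norm_num)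
    filter_upwards [this] with u hu
    simp only [Function.comp] at hu
    rw [Real.norm_of_nonneg (Real.exp_pos u).le] at hu
    exact (le_abs_self _).trans hu
  obtain ⟨u₁, hu₁⟩ := eventually_atTop.1 hev
  refine ⟨max u₁ 2, by positivity, fun u hu => ?_⟩
  have hu1 := hu₁ u (le_trans (le_max_left _ _) hu)
  have hu2 : 2 ≤ u := le_trans (le_max_right _ _) hu
  have he := Real.exp_pos u
  have he1 : 1 ≤ Real.exp u := Real.one_le_exp (by linarith)
  have hlow := Chebyshev.theta_ge' (x := 3 * Real.exp u) (by linarith)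
  have hup := Chebyshev.theta_le_log4_mul_x he.le
  have h4 : Real.log 4 = 2 * Real.log 2 := by
    rw [show (4 : ℝ) = 2 ^ 2 by norm_num, Real.log_pow]; norm_num
  have hmono : Chebyshev.theta (3 * Real.exp u) ≤ Chebyshev.theta (Real.exp (u + 1.1)) := by
    apply Chebyshev.theta_mono
    rw [Real.exp_add, mul_comm]
    apply mul_le_mul_of_nonneg_left _ he.le
    rw [← Real.log_le_iff_le_exp (by norm_num)]
    linarith [Real.log_three_lt_d9]
  have hsum := sum_primesIn_add (L := u) (U := u + 1.1) (by linarith) (fun p => Real.log p)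
  have hd : ∑ p ∈ primesIn u (u + 1.1), Real.log p ≥ (1 / 2) * Real.exp u := by
    unfold Chebyshev.theta at hlow hup hmono
    have l2 := Real.log_two_gt_d9
    nlinarith
  have h5 : Real.exp (1.1 : ℝ) ≤ 3.1 := by
    have e1 : Real.exp (1.1 : ℝ) = Real.exp 1 * Real.exp 0.1 := by rw [← Real.exp_add]; norm_num
    have e2 : Real.exp (0.1 : ℝ) ≤ 1.12 := by
      have := Real.exp_bound_div_one_sub_of_interval (x := 0.1) (by norm_num) (by norm_num)
      norm_num at this ⊢
      linarith
    rw [e1]; nlinarith [Real.exp_one_lt_d9, Real.exp_pos 1, Real.exp_pos (0.1 : ℝ)]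
  calc 1 / (12 * u) ≤ ((1 / 2) * Real.exp u) * (1 / ((2 * u) * (3 * Real.exp u))) := by
        rw [mul_one_div, div_le_div_iff₀ (by positivity) (by positivity)]
        nlinarith
    _ ≤ (∑ p ∈ primesIn u (u + 1.1), Real.log p) * (1 / ((2 * u) * (3 * Real.exp u))) := by
        apply mul_le_mul_of_nonneg_right hd (by positivity)
    _ ≤ ∑ p ∈ primesIn u (u + 1.1), (1 / p : ℝ) := by
        rw [Finset.sum_mul]
        apply Finset.sum_le_sum
        intro p hp
        obtain ⟨hpp, h1, h2⟩ := mem_primesIn.1 hp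
        have hp0 : (0 : ℝ) < p := by exact_mod_cast hpp.pos
        have h6 : (p : ℝ) ≤ 3.1 * Real.exp u := by
          rw [Real.log_le_iff_le_exp hp0, Real.exp_add] at h2
          nlinarith
        rw [mul_one_div, div_le_div_iff₀ (by positivity) hp0]
        nlinarith [mul_le_mul h2 h6 hp0.le (by linarith)]

lemma log_factorial_eq (N : ℕ) : Real.log (N.factorial : ℝ) =
    ∑ p ∈ (Finset.Ioc 0 N).filter Nat.Prime, (N.factorial.factorization p : ℝ) * Real.log p := by
  rw [Real.log_nat_eq_sum_factorization]
  apply Finsupp.sum_of_support_subset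
  · intro p hp
    rw [Nat.support_factorization, Nat.mem_primeFactors] at hp
    simp only [Finset.mem_filter, Finset.mem_Ioc]
    exact ⟨⟨hp.1.pos, (Nat.Prime.dvd_factorial hp.1).1 hp.2.1⟩, hp.1⟩
  · simp

/-- The upper bound in Mertens' first theorem, from `p ^ (N / p) ∣ N!` and `θ N ≤ N log 4`. -/
lemma sum_log_div_le (N : ℕ) (hN : 1 ≤ N) :
    ∑ p ∈ (Finset.Ioc 0 N).filter Nat.Prime, Real.log p / p ≤ Real.log N + 2 := by
  have hN0 : (0 : ℝ) < N := by exact_mod_cast hN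
  have h1 : ∀ p ∈ (Finset.Ioc 0 N).filter Nat.Prime,
      (N : ℝ) * (Real.log p / p) - Real.log p ≤
        (N.factorial.factorization p : ℝ) * Real.log p := by
    intro p hp
    simp only [Finset.mem_filter, Finset.mem_Ioc] at hp
    have hpp := hp.2
    have hp0 : (0 : ℝ) < p := by exact_mod_cast hpp.pos
    have hdvd : p ^ (N / p) ∣ N.factorial := by
      have h2 : p ^ (N / p) ∣ (p * (N / p)).factorial := by
        generalize N / p = k
        induction k with
        | zero => simp
        | succ k ih =>
          have : (p * (k + 1)) = p * k + (p - 1) + 1 := by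
            have := hpp.pos; rw [mul_add]; omega
          rw [this, Nat.factorial_succ, ← this, pow_succ, mul_comm]
          apply mul_dvd_mul (dvd_mul_right _ _)
          exact ih.trans (Nat.factorial_dvd_factorial (by omega))
      exact h2.trans (Nat.factorial_dvd_factorial (Nat.mul_div_le N p))
    have h3 : N / p ≤ N.factorial.factorization p :=
      (hpp.pow_dvd_iff_le_factorization (Nat.factorial_ne_zero N)).1 hdvd
    have h4 : (N : ℝ) / p - 1 ≤ (N.factorial.factorization p : ℝ) := by
      have : (N : ℝ) / p < (N / p : ℕ) + 1 := by
        rw [div_lt_iff₀ hp0]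
        have : N < (N / p + 1) * p := by
          rw [← Nat.div_lt_iff_lt_mul hpp.pos]; exact Nat.lt_succ_self _
        exact_mod_cast this
      have h3' : ((N / p : ℕ) : ℝ) ≤ (N.factorial.factorization p : ℝ) := by exact_mod_cast h3
      linarith
    have := mul_le_mul_of_nonneg_right h4 (Real.log_natCast_nonneg p)
    calc (N : ℝ) * (Real.log p / p) - Real.log p = ((N : ℝ) / p - 1) * Real.log p := by ring
      _ ≤ _ := this
  have h2 := Finset.sum_le_sum h1
  rw [← log_factorial_eq, Finset.sum_sub_distrib, ← Finset.mul_sum] at h2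
  have h3 := Chebyshev.theta_le_log4_mul_x (x := N) hN0.le
  unfold Chebyshev.theta at h3
  rw [Nat.floor_natCast] at h3
  have h4 : Real.log (N.factorial : ℝ) ≤ N * Real.log N := by
    rw [← Real.log_pow]
    apply Real.log_le_log (by exact_mod_cast Nat.factorial_pos N)
    exact_mod_cast Nat.factorial_le_pow N
  have h5 : Real.log 4 ≤ 2 := by
    have : Real.log 4 = 2 * Real.log 2 := by
      rw [show (4 : ℝ) = 2 ^ 2 by norm_num, Real.log_pow]; norm_num
    rw [this]; linarith [Real.log_two_lt_d9]
  have h6 : (N : ℝ) * ∑ p ∈ (Finset.Ioc 0 N).filter Nat.Prime, Real.log p / p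
      ≤ N * (Real.log N + 2) := by nlinarith
  exact le_of_mul_le_mul_left h6 hN0

/-- The lower bound in Mertens' first theorem. -/
lemma le_sum_log_div : ∃ C : ℝ, ∀ N : ℕ, 1 ≤ N →
    Real.log N - C ≤ ∑ p ∈ (Finset.Ioc 0 N).filter Nat.Prime, Real.log p / p := by
  have hsum : Summable (fun n : ℕ => 4 * ((n : ℝ) ^ (3 / 2 : ℝ))⁻¹) :=
    (Real.summable_nat_rpow_inv.2 (by norm_num)).mul_left 4
  refine ⟨(∑' n : ℕ, 4 * ((n : ℝ) ^ (3 / 2 : ℝ))⁻¹) + 1, fun N hN => ?_⟩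
  have hN0 : (0 : ℝ) < N := by exact_mod_cast hN
  -- Legendre: `v_p(N!) ≤ N / (p - 1)`, and `1 / (p - 1) = 1 / p + 1 / (p (p - 1))`.
  have h1 : ∀ p ∈ (Finset.Ioc 0 N).filter Nat.Prime,
      (N.factorial.factorization p : ℝ) * Real.log p ≤
        N * (Real.log p / p + 4 * ((p : ℝ) ^ (3 / 2 : ℝ))⁻¹) := by
    intro p hp
    simp only [Finset.mem_filter, Finset.mem_Ioc] at hp
    have hpp := hp.2
    have hp0 : (0 : ℝ) < p := by exact_mod_cast hpp.pos
    have hp2 : (2 : ℝ) ≤ p := by exact_mod_cast hpp.two_le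
    have := Fact.mk hpp
    have h3 : (p - 1) * N.factorial.factorization p ≤ N := by
      rw [Nat.factorization_def _ hpp, sub_one_mul_padicValNat_factorial]
      exact Nat.sub_le _ _
    have h4 : ((p : ℝ) - 1) * (N.factorial.factorization p : ℝ) ≤ N := by
      have : (((p - 1) * N.factorial.factorization p : ℕ) : ℝ) ≤ N := by exact_mod_cast h3
      rwa [Nat.cast_mul, Nat.cast_sub hpp.one_lt.le, Nat.cast_one] at this
    have hl : Real.log p ≤ 2 * √(p : ℝ) := by
      have := Real.log_le_sub_one_of_pos (Real.sqrt_pos.2 hp0)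
      have h5 : Real.log (√(p : ℝ)) = Real.log p / 2 := Real.log_sqrt hp0.le
      linarith
    have h6 : (p : ℝ) ^ (3 / 2 : ℝ) = p * √(p : ℝ) := by
      rw [Real.sqrt_eq_rpow, ← Real.rpow_one_add' hp0.le (by norm_num)]
      norm_num
    have hs : 0 < √(p : ℝ) := Real.sqrt_pos.2 hp0
    have hss : √(p : ℝ) * √(p : ℝ) = p := Real.mul_self_sqrt hp0.le
    have h7 : Real.log p / (p - 1) ≤ Real.log p / p + 4 * ((p : ℝ) ^ (3 / 2 : ℝ))⁻¹ := by
      have e : Real.log p / ((p : ℝ) - 1) = Real.log p / p + Real.log p / (p * (p - 1)) := by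
        have : (p : ℝ) - 1 ≠ 0 := by linarith
        field_simp
        ring
      rw [e, h6]
      gcongr
      rw [← div_eq_mul_inv, div_le_div_iff₀ (by nlinarith) (by positivity)]
      have : Real.log p * √(p : ℝ) ≤ 4 * (p - 1) := by nlinarith
      nlinarith
    have h8 : (N.factorial.factorization p : ℝ) ≤ N / (p - 1) := by
      rw [le_div_iff₀ (by linarith)]; linarith
    calc (N.factorial.factorization p : ℝ) * Real.log p ≤ N / (p - 1) * Real.log p :=
          mul_le_mul_of_nonneg_right h8 (Real.log_natCast_nonneg p)
      _ = N * (Real.log p / (p - 1)) := by ring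
      _ ≤ _ := mul_le_mul_of_nonneg_left h7 hN0.le
  have h2 := Finset.sum_le_sum h1
  rw [← log_factorial_eq, ← Finset.mul_sum, Finset.sum_add_distrib] at h2
  have h3 : ∑ p ∈ (Finset.Ioc 0 N).filter Nat.Prime, 4 * ((p : ℝ) ^ (3 / 2 : ℝ))⁻¹ ≤
      ∑' n : ℕ, 4 * ((n : ℝ) ^ (3 / 2 : ℝ))⁻¹ :=
    hsum.sum_le_tsum _ (fun _ _ => by positivity)
  have h4 := Stirling.le_log_factorial_stirling (n := N) (by omega)
  have h5 : 0 ≤ Real.log N := Real.log_natCast_nonneg N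
  have h6 : 0 ≤ Real.log (2 * Real.pi) := Real.log_nonneg (by linarith [Real.pi_gt_three])
  have h7 : (N : ℝ) * (Real.log N - 1) ≤
      N * (∑ p ∈ (Finset.Ioc 0 N).filter Nat.Prime, Real.log p / p +
        ∑ p ∈ (Finset.Ioc 0 N).filter Nat.Prime, 4 * ((p : ℝ) ^ (3 / 2 : ℝ))⁻¹) := by
    linarith
  have h8 := le_of_mul_le_mul_left h7 hN0
  linarith

/-- A form of Mertens' theorem: `∑ 1/p` over `L < log p ≤ ρ L` is at least `1 - 1/ρ - C/L`. For `ρ`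
near `1` this is a sharp estimate up to a factor `1 + O(ρ - 1)`. -/
lemma sum_inv_cell_ge : ∃ C : ℝ, 0 < C ∧ ∀ L ρ : ℝ, 1 ≤ L → 1 ≤ ρ →
    1 - 1 / ρ - C / L ≤ ∑ p ∈ primesIn L (ρ * L), (1 / p : ℝ) := by
  obtain ⟨C, hC⟩ := le_sum_log_div
  refine ⟨|C| + 4, by positivity, fun L ρ hL hρ => ?_⟩
  have hL0 : 0 < L := by linarith
  have hLU : L ≤ ρ * L := by nlinarith
  have hsum := sum_primesIn_add hLU (fun p => Real.log p / p)
  have f1 : 1 ≤ ⌊Real.exp L⌋₊ := Nat.one_le_floor_iff _ |>.2 (Real.one_le_exp hL0.le)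
  have f2 : 1 ≤ ⌊Real.exp (ρ * L)⌋₊ :=
    Nat.one_le_floor_iff _ |>.2 (Real.one_le_exp (by linarith))
  have h1 := sum_log_div_le _ f1
  have h2 := hC _ f2
  have h3 : Real.log (⌊Real.exp L⌋₊ : ℝ) ≤ L := by
    rw [Real.log_le_iff_le_exp (by exact_mod_cast f1)]
    exact Nat.floor_le (Real.exp_pos _).le
  have h4 : ρ * L - 1 ≤ Real.log (⌊Real.exp (ρ * L)⌋₊ : ℝ) := by
    rw [Real.le_log_iff_exp_le (by exact_mod_cast f2)]
    have e1 : Real.exp (ρ * L) < (⌊Real.exp (ρ * L)⌋₊ : ℝ) + 1 := Nat.lt_floor_add_one _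
    have e2 : Real.exp (ρ * L) = Real.exp 1 * Real.exp (ρ * L - 1) := by
      rw [← Real.exp_add]; ring_nf
    have e3 : (1 : ℝ) ≤ Real.exp (ρ * L - 1) := Real.one_le_exp (by linarith)
    nlinarith [Real.exp_one_gt_d9]
  have h5 : (ρ - 1) * L - (|C| + 3) ≤ ∑ p ∈ primesIn L (ρ * L), Real.log p / p := by
    have := le_abs_self C
    nlinarith
  have h6 : ∑ p ∈ primesIn L (ρ * L), Real.log p / p ≤
      (ρ * L) * ∑ p ∈ primesIn L (ρ * L), (1 / p : ℝ) := by
    rw [Finset.mul_sum]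
    apply Finset.sum_le_sum
    intro p hp
    obtain ⟨hpp, _, hU⟩ := mem_primesIn.1 hp
    rw [mul_one_div]
    gcongr
  have h7 := h5.trans h6
  have hρL : 0 < ρ * L := by positivity
  rw [mul_comm (ρ * L), ← div_le_iff₀ hρL] at h7
  refine le_trans ?_ h7
  have e : ((ρ - 1) * L - (|C| + 3)) / (ρ * L) = 1 - 1 / ρ - (|C| + 3) / (ρ * L) := by
    field_simp
  rw [e]
  have : (|C| + 3) / (ρ * L) ≤ (|C| + 4) / L := by
    gcongr
    · linarith
  linarith

/-! ### Averages over residue classes -/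

/-- The Chinese remainder theorem as independence of the residues modulo coprime `m` and `n`. -/
lemma sum_crt {m n : ℕ} (hmn : m.Coprime n) (hm : 0 < m) (hn : 0 < n) (f : ℕ → ℕ → ℝ) :
    ∑ x ∈ Finset.range (m * n), f (x % m) (x % n) =
      ∑ y ∈ Finset.range m, ∑ z ∈ Finset.range n, f y z := by
  rw [← Finset.sum_product']
  refine Finset.sum_bij (fun x _ => (x % m, x % n)) ?_ ?_ ?_ ?_
  · intro x _
    simp [Nat.mod_lt _ hm, Nat.mod_lt _ hn]
  · intro x hx y hy h
    simp only [Prod.mk.injEq] at h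
    have h2 : x ≡ y [MOD m * n] := (Nat.modEq_and_modEq_iff_modEq_mul hmn).1 ⟨h.1, h.2⟩
    exact Nat.ModEq.eq_of_lt_of_lt h2 (Finset.mem_range.1 hx) (Finset.mem_range.1 hy)
  · rintro ⟨y, z⟩ h
    simp only [Finset.mem_product, Finset.mem_range] at h
    refine ⟨Nat.chineseRemainder hmn y z, ?_, ?_⟩
    · exact Finset.mem_range.2 (Nat.chineseRemainder_lt_mul hmn y z hm.ne' hn.ne')
    · have h2 := (Nat.chineseRemainder hmn y z).2
      exact Prod.ext (Eq.trans h2.1 (Nat.mod_eq_of_lt h.1))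
        (Eq.trans h2.2 (Nat.mod_eq_of_lt h.2))
  · intro x _
    rfl

lemma sum_mod (n k : ℕ) (f : ℕ → ℝ) :
    ∑ x ∈ Finset.range (n * k), f (x % n) = k * ∑ x ∈ Finset.range n, f x := by
  induction k with
  | zero => simp
  | succ k ih =>
    rw [mul_add, mul_one, Finset.sum_range_add, ih]
    have : ∑ x ∈ Finset.range n, f ((n * k + x) % n) = ∑ x ∈ Finset.range n, f x := by
      apply Finset.sum_congr rfl
      intro x hx
      rw [Nat.mul_add_mod, Nat.mod_eq_of_lt (Finset.mem_range.1 hx)]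
    rw [this]
    push_cast
    ring

lemma sum_dvd_indicator {p Q : ℕ} (hp : 0 < p) (hQ : p ∣ Q) :
    ∑ x ∈ Finset.range Q, (if p ∣ x then (1 : ℝ) else 0) = Q * (1 / p) := by
  obtain ⟨k, rfl⟩ := hQ
  have h := sum_mod p k (fun x => if p ∣ x then (1 : ℝ) else 0)
  simp only [Nat.dvd_mod_iff dvd_rfl] at h
  rw [h]
  have h2 : ∑ x ∈ Finset.range p, (if p ∣ x then (1 : ℝ) else 0) = 1 := by
    rw [Finset.sum_eq_single 0]
    · simp
    · intro x hx hx0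
      rw [if_neg]
      exact fun hd => hx0 (Nat.eq_zero_of_dvd_of_lt hd (Finset.mem_range.1 hx))
    · intro h0
      exact absurd (Finset.mem_range.2 hp) h0
  rw [h2]
  push_cast
  have : (p : ℝ) ≠ 0 := by positivity
  field_simp

/-- The proportion of residues divisible by some prime of `W` is `1 - ∏ (1 - 1/p)`, and
`1 - 1/p ≤ exp (-1/p)`. -/
lemma sum_exists_dvd_ge (W : Finset ℕ) (hW : ∀ p ∈ W, p.Prime) {Q : ℕ}
    (hQ : (∏ p ∈ W, p) ∣ Q) :
    (Q : ℝ) * (1 - Real.exp (-∑ p ∈ W, (1 / p : ℝ))) ≤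
      ∑ x ∈ Finset.range Q, (if ∃ p ∈ W, p ∣ x then (1 : ℝ) else 0) := by
  set n := ∏ p ∈ W, p with hn
  have hdvd : ∀ p ∈ W, p ∣ n := fun p hp => Finset.dvd_prod_of_mem _ hp
  obtain ⟨k, rfl⟩ := hQ
  have hn0 : 0 < n := Finset.prod_pos (fun p hp => (hW p hp).pos)
  have h := sum_mod n k (fun x => if n.Coprime x then (1 : ℝ) else 0)
  have hcop : ∀ x : ℕ, n.Coprime x ↔ ¬ ∃ p ∈ W, p ∣ x := by
    intro x
    rw [hn, Nat.coprime_prod_left_iff]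
    push Not
    exact forall₂_congr (fun p hp => (hW p hp).coprime_iff_not_dvd)
  have hcm : ∀ x : ℕ, n.Coprime (x % n) ↔ n.Coprime x := by
    intro x
    rw [Nat.coprime_comm, Nat.coprime_comm (n := n)]
    unfold Nat.Coprime
    rw [← Nat.gcd_rec, Nat.gcd_comm]
  simp only [hcm] at h
  have htot : ∑ x ∈ Finset.range n, (if n.Coprime x then (1 : ℝ) else 0) = (n.totient : ℝ) := by
    rw [Finset.sum_boole, Nat.totient]
  have hpf : n.primeFactors = W := by
    rw [hn]; exact Nat.primeFactors_prod hW
  have htot2 : (n.totient : ℝ) = n * ∏ p ∈ W, (1 - (p : ℝ)⁻¹) := by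
    have := Nat.totient_eq_mul_prod_factors n
    rw [hpf] at this
    have := congrArg (fun t : ℚ => (t : ℝ)) this
    push_cast at this
    exact this
  have hprod : ∏ p ∈ W, (1 - (p : ℝ)⁻¹) ≤ Real.exp (-∑ p ∈ W, (1 / p : ℝ)) := by
    rw [← Finset.sum_neg_distrib, Real.exp_sum]
    apply Finset.prod_le_prod
    · intro p hp
      have : (1 : ℝ) ≤ p := by exact_mod_cast (hW p hp).one_lt.le
      have := inv_le_one_of_one_le₀ this
      linarith
    · intro p hp
      have := Real.add_one_le_exp (-(1 / p : ℝ))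
      rw [one_div] at this ⊢
      linarith
  have hsplit : ∑ x ∈ Finset.range (n * k), (if ∃ p ∈ W, p ∣ x then (1 : ℝ) else 0) =
      (n * k : ℕ) - ∑ x ∈ Finset.range (n * k), (if n.Coprime x then (1 : ℝ) else 0) := by
    rw [eq_sub_iff_add_eq, ← Finset.sum_add_distrib]
    rw [Finset.sum_congr rfl (g := fun _ => (1 : ℝ))]
    · simp
    · intro x _
      by_cases hx : ∃ p ∈ W, p ∣ x
      · rw [if_pos hx, if_neg (fun hc => (hcop x).1 hc hx), add_zero]
      · rw [if_neg hx, if_pos ((hcop x).2 hx), zero_add]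
  rw [hsplit, h, htot, htot2]
  push_cast
  have : (k : ℝ) * (n * ∏ p ∈ W, (1 - (p : ℝ)⁻¹)) ≤
      k * (n * Real.exp (-∑ p ∈ W, (1 / p : ℝ))) := by gcongr
  linarith

/-! ### One random prime from a cell -/

/-- The ratio of the endpoints of a cell on the scale of `log p`. It is a tenth power because the bound
for collisions is split into ten factors. -/
noncomputable def cellRatio : ℝ := (1.001 : ℝ) ^ 10

/-- A prime of `B` dividing `z` if there is one, and `1` otherwise. -/
noncomputable def pick (B : Finset ℕ) (z : ℕ) : ℕ :=
  if h : ∃ p ∈ B, p ∣ z then h.choose else 1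

lemma pick_of_exists {B : Finset ℕ} {z : ℕ} (h : ∃ p ∈ B, p ∣ z) :
    pick B z ∈ B ∧ pick B z ∣ z := by
  unfold pick
  rw [dif_pos h]
  exact h.choose_spec

lemma pick_of_not {B : Finset ℕ} {z : ℕ} (h : ¬ ∃ p ∈ B, p ∣ z) : pick B z = 1 := by
  unfold pick
  rw [dif_neg h]

lemma pick_dvd (B : Finset ℕ) (z : ℕ) : pick B z ∣ z := by
  by_cases h : ∃ p ∈ B, p ∣ z
  · exact (pick_of_exists h).2
  · rw [pick_of_not h]; exact one_dvd _

lemma pick_dvd_prod (B : Finset ℕ) (z : ℕ) : pick B z ∣ ∏ p ∈ B, p := by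
  by_cases h : ∃ p ∈ B, p ∣ z
  · exact Finset.dvd_prod_of_mem _ (pick_of_exists h).1
  · rw [pick_of_not h]; exact one_dvd _

/-- A cell far out contains a prime divisor of a random integer with probability about
`1 - 1 / cellRatio ≈ 0.00995`. -/
lemma cell_active : ∃ L₁ : ℝ, 1 ≤ L₁ ∧ ∀ L ≥ L₁, ∀ B, B = primesIn L (cellRatio * L) →
    (0.0097 : ℝ) * (∏ p ∈ B, p : ℕ) ≤
      ∑ z ∈ Finset.range (∏ p ∈ B, p), (if ∃ p ∈ B, p ∣ z then (1 : ℝ) else 0) := by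
  obtain ⟨C, hC0, hC⟩ := sum_inv_cell_ge
  refine ⟨max 1 (C / 0.00004), le_max_left _ _, fun L hL B hB => ?_⟩
  have hL1 : 1 ≤ L := (le_max_left _ _).trans hL
  have hL2 : C / 0.00004 ≤ L := (le_max_right _ _).trans hL
  have h1 := hC L cellRatio hL1 (by unfold cellRatio; norm_num)
  rw [← hB] at h1
  have h2 : C / L ≤ 0.00004 := by
    rw [div_le_iff₀ (by norm_num)] at hL2
    rw [div_le_iff₀ (by linarith)]
    linarith
  have h3 : (0.00994 : ℝ) ≤ 1 - 1 / cellRatio := by unfold cellRatio; norm_num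
  have h4 : Real.exp (-∑ p ∈ B, (1 / p : ℝ)) ≤ 0.9903 := by
    have e1 : Real.exp (-∑ p ∈ B, (1 / p : ℝ)) ≤ Real.exp (-0.0099) :=
      Real.exp_le_exp.2 (by linarith)
    have e2 : (1.0099 : ℝ) ≤ Real.exp 0.0099 := by
      have := Real.add_one_le_exp (0.0099 : ℝ)
      linarith
    have e3 : Real.exp (-0.0099) ≤ (1.0099 : ℝ)⁻¹ := by
      rw [Real.exp_neg]
      exact inv_anti₀ (by norm_num) e2
    refine e1.trans (e3.trans ?_)
    norm_num
  have h5 := sum_exists_dvd_ge B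
    (fun p hp => by rw [hB] at hp; exact (mem_primesIn.1 hp).1) (dvd_refl _)
  refine le_trans ?_ h5
  rw [mul_comm]
  apply mul_le_mul_of_nonneg_left _ (Nat.cast_nonneg _)
  linarith

/-- Anticoncentration: the logarithm of the prime picked in a cell rarely falls into a given
window of bounded length. -/
lemma cell_window {L U : ℝ} (hL : 0 < L) {B : Finset ℕ} (hB : B = primesIn L U) (w c : ℝ)
    (hc : 1 ≤ |c|) :
    ∑ z ∈ Finset.range (∏ p ∈ B, p),
      (if (∃ p ∈ B, p ∣ z) ∧ |w + c * Real.log (pick B z)| ≤ 1 then (1 : ℝ) else 0) ≤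
      (12 / L) * (∏ p ∈ B, p : ℕ) := by
  set Q := ∏ p ∈ B, p with hQ
  set S := B.filter (fun p : ℕ => |w + c * Real.log p| ≤ 1) with hS
  have h1 : ∀ z ∈ Finset.range Q,
      (if (∃ p ∈ B, p ∣ z) ∧ |w + c * Real.log (pick B z)| ≤ 1 then (1 : ℝ) else 0) ≤
        ∑ p ∈ S, (if p ∣ z then (1 : ℝ) else 0) := by
    intro z _
    split_ifs with h
    · have hp := pick_of_exists h.1
      have hpS : pick B z ∈ S := Finset.mem_filter.2 ⟨hp.1, h.2⟩
      have := Finset.single_le_sum (f := fun p => if p ∣ z then (1 : ℝ) else 0) (s := S)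
        (fun p _ => by positivity) hpS
      simpa [hp.2] using this
    · exact Finset.sum_nonneg (fun p _ => by positivity)
  refine (Finset.sum_le_sum h1).trans ?_
  rw [Finset.sum_comm]
  have h2 : ∀ p ∈ S, ∑ z ∈ Finset.range Q, (if p ∣ z then (1 : ℝ) else 0) = Q * (1 / p) := by
    intro p hp
    have hpB := (Finset.mem_filter.1 hp).1
    have hpp : p.Prime := by rw [hB] at hpB; exact (mem_primesIn.1 hpB).1
    exact sum_dvd_indicator hpp.pos (Finset.dvd_prod_of_mem _ hpB)
  rw [Finset.sum_congr rfl h2, ← Finset.mul_sum, mul_comm]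
  apply mul_le_mul_of_nonneg_right _ (Nat.cast_nonneg _)
  apply sum_inv_window_le (u := -w / c - 1) hL
  intro p hp
  obtain ⟨hpB, hw⟩ := Finset.mem_filter.1 hp
  rw [hB] at hpB
  obtain ⟨hpp, hpL, _⟩ := mem_primesIn.1 hpB
  have hc0 : c ≠ 0 := by rintro rfl; norm_num at hc
  have e : w + c * Real.log p = c * (Real.log p - -w / c) := by field_simp; ring
  rw [e, abs_mul] at hw
  have h3 : |Real.log p - -w / c| ≤ 1 := by
    nlinarith [abs_nonneg (Real.log p - -w / c)]
  rw [abs_le] at h3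
  exact ⟨hpp, hpL.le, by linarith, by linarith⟩

/-! ### Collisions among signed sums -/

/-- The number of pairs of indices with `|f e - f e' + t| ≤ 1`. -/
noncomputable def cross {ι : Type} [Fintype ι] (f : ι → ℝ) (t : ℝ) : ℝ :=
  ∑ e, ∑ e', if |f e - f e' + t| ≤ 1 then (1 : ℝ) else 0

lemma cross_nonneg {ι : Type} [Fintype ι] (f : ι → ℝ) (t : ℝ) : 0 ≤ cross f t :=
  Finset.sum_nonneg (fun _ _ => Finset.sum_nonneg (fun _ _ => by positivity))

/-- The coefficients `-1, 0, 1`. -/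
noncomputable def sgn3 : Fin 3 → ℝ := ![-1, 0, 1]

/-- The nine pairs of new coefficients, grouped by their difference. -/
lemma cross_extend {ι : Type} [Fintype ι] (f : ι → ℝ) (a : ℝ) :
    cross (fun e : ι × Fin 3 => f e.1 + sgn3 e.2 * a) 0 =
      3 * cross f 0 + 2 * cross f a + 2 * cross f (-a) + cross f (2 * a) + cross f (-2 * a) := by
  have key : ∀ k k' : Fin 3, ∑ e, ∑ e', (if |f e + sgn3 k * a - (f e' + sgn3 k' * a) + 0| ≤ 1
      then (1 : ℝ) else 0) = cross f ((sgn3 k - sgn3 k') * a) := by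
    intro k k'
    unfold cross
    refine Finset.sum_congr rfl (fun e _ => Finset.sum_congr rfl (fun e' _ => ?_))
    rw [show f e + sgn3 k * a - (f e' + sgn3 k' * a) + 0 = f e - f e' + (sgn3 k - sgn3 k') * a by
      ring]
  have h1 : cross (fun e : ι × Fin 3 => f e.1 + sgn3 e.2 * a) 0 =
      ∑ k, ∑ k', cross f ((sgn3 k - sgn3 k') * a) := by
    simp only [← key]
    unfold cross
    simp only [Fintype.sum_prod_type]
    rw [Finset.sum_comm]
    refine Finset.sum_congr rfl (fun k _ => ?_)
    rw [Finset.sum_comm]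
    simp only [Finset.sum_comm (s := (Finset.univ : Finset (Fin 3)))]
    rw [Finset.sum_comm]
  rw [h1]
  simp only [Fin.sum_univ_three, sgn3, Matrix.cons_val_zero, Matrix.cons_val_one,
    Matrix.cons_val]
  ring_nf

/-- Averaged over the residue class, a shift by a nonzero multiple of the logarithm of the picked
prime produces few collisions. -/
lemma sum_cross_le {ι : Type} [Fintype ι] (f : ι → ℝ) {L U : ℝ} (hL : 0 < L) {B : Finset ℕ}
    (hB : B = primesIn L U) (c : ℝ) (hc : 1 ≤ |c|) :
    ∑ z ∈ Finset.range (∏ p ∈ B, p),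
      (if ∃ p ∈ B, p ∣ z then cross f (c * Real.log (pick B z)) else 0) ≤
      (Fintype.card ι : ℝ) ^ 2 * ((12 / L) * (∏ p ∈ B, p : ℕ)) := by
  have h1 : ∀ z, (if ∃ p ∈ B, p ∣ z then cross f (c * Real.log (pick B z)) else 0) =
      ∑ e, ∑ e', (if (∃ p ∈ B, p ∣ z) ∧ |f e - f e' + c * Real.log (pick B z)| ≤ 1
        then (1 : ℝ) else 0) := by
    intro z
    unfold cross
    by_cases h : ∃ p ∈ B, p ∣ z
    · simp only [h, true_and, if_true]
    · simp only [h, false_and, if_false, Finset.sum_const_zero]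
  simp only [h1]
  rw [Finset.sum_comm]
  have h2 : ∀ e e', ∑ z ∈ Finset.range (∏ p ∈ B, p),
      (if (∃ p ∈ B, p ∣ z) ∧ |f e - f e' + c * Real.log (pick B z)| ≤ 1
        then (1 : ℝ) else 0) ≤ (12 / L) * (∏ p ∈ B, p : ℕ) :=
    fun e e' => cell_window hL hB _ c hc
  calc _ ≤ ∑ e : ι, ∑ e' : ι, (12 / L) * (∏ p ∈ B, p : ℕ) := by
        refine Finset.sum_le_sum (fun e _ => ?_)
        rw [Finset.sum_comm]
        exact Finset.sum_le_sum (fun e' _ => h2 e e')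
    _ = _ := by
        simp only [Finset.sum_const, Finset.card_univ, nsmul_eq_mul]
        ring

/-- For each residue `x` modulo `Q`, a family of signed sums `s x e = log d - log d'` with `d` and
`d'` dividing both `x` and `Q`, where `Q` is composed of primes with logarithm in `(L₀, L]`. The
proportion of colliding pairs of the family at `x` is at most `H x * Z x ^ 9`, where the averages of
`H` and `Z` are at most `h / L` and `200000`. The average of the proportion itself would be
dominated by the rare `x` with few prime factors; bounding the averages of the ten factors instead
plays the role of bounding a moment of order `1 / 10`, which those `x` do not dominate. -/
structure SignedSums (Q : ℕ) (L₀ L h : ℝ) : Type 1 where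
  /-- The index set of the signs. -/
  ι : Type
  fin : Fintype ι
  ne : Nonempty ι
  /-- The signed sums. -/
  s : ℕ → ι → ℝ
  /-- The first factor of the collision bound, of average `≪ 1 / L`. -/
  H : ℕ → ℝ
  /-- The second factor of the collision bound, of bounded average. -/
  Z : ℕ → ℝ
  pos : 0 < Q
  primes : ∀ p : ℕ, p.Prime → p ∣ Q → L₀ < Real.log p ∧ Real.log p ≤ L
  dvd : ∀ x e, ∃ d d' : ℕ, d ∣ Q ∧ d ∣ x ∧ d' ∣ Q ∧ d' ∣ x ∧ s x e = Real.log d - Real.log d'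
  bound : ∀ x e, |s x e| ≤ 200 * L
  H_nonneg : ∀ x, 0 ≤ H x
  Z_nonneg : ∀ x, 0 ≤ Z x
  coll : ∀ x, cross (s x) 0 ≤ H x * Z x ^ 9 * (Fintype.card ι : ℝ) ^ 2
  sum_H : L * ∑ x ∈ Finset.range Q, H x ≤ h * Q
  sum_Z : ∑ x ∈ Finset.range Q, Z x ≤ 200000 * Q

/-- Adjoining the prime picked in the next cell. If there is one, a third of the pairs of new
coefficients agree, so the old collisions lose a factor `1/3 ≤ 0.896 ^ 10`; the collisions between
different new coefficients are rare by anticoncentration. If there is none, nothing is lost. The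
averages contract because `1.001 * (1 - 0.0097 * (1 - 0.896)) < 0.999991`. -/
lemma signedSums_step {L₁ : ℝ} (hL₁ : ∀ L ≥ L₁, ∀ B, B = primesIn L (cellRatio * L) →
    (0.0097 : ℝ) * (∏ p ∈ B, p : ℕ) ≤
      ∑ z ∈ Finset.range (∏ p ∈ B, p), (if ∃ p ∈ B, p ∣ z then (1 : ℝ) else 0))
    {Q : ℕ} {L₀ L h : ℝ} (hL0 : L₀ ≤ L) (hL : 0 < L) (hLL : L₁ ≤ L) (S : SignedSums Q L₀ L h) :
    ∃ Q', Nonempty (SignedSums Q' L₀ (cellRatio * L) (0.999991 * h + 13)) := by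
  obtain ⟨ι, fin, ne, s, H, Z, pos, primes, dvd, bound, H_nonneg, Z_nonneg, coll, sum_H, sum_Z⟩ := S
  set B := primesIn L (cellRatio * L) with hB
  have hBp : ∀ p ∈ B, p.Prime := fun p hp => (mem_primesIn.1 hp).1
  have hact := hL₁ L hLL B hB
  have hcr : cellRatio = (1.001 : ℝ) ^ 10 := rfl
  have hcr1 : 1.01 ≤ cellRatio := by rw [hcr]; norm_num
  have hcr2 : cellRatio ≤ 1.02 := by rw [hcr]; norm_num
  have hsc := fun x c hc => sum_cross_le (s x) hL hB c hc
  set QB := ∏ p ∈ B, p with hQB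
  have hQB0 : 0 < QB := Finset.prod_pos (fun p hp => (hBp p hp).pos)
  have hcop : Q.Coprime QB := by
    rw [hQB, Nat.coprime_prod_right_iff]
    intro p hp
    rw [Nat.coprime_comm, (hBp p hp).coprime_iff_not_dvd]
    intro hd
    have := (primes p (hBp p hp) hd).2
    linarith [(mem_primesIn.1 hp).2.1]
  let act : ℕ → Prop := fun z => ∃ p ∈ B, p ∣ z
  let a : ℕ → ℝ := fun z => Real.log (pick B z)
  have ha_not : ∀ z, ¬ act z → a z = 0 := by
    intro z hz
    change Real.log (pick B z) = 0
    rw [pick_of_not hz]; simp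
  have ha_bd : ∀ z, |a z| ≤ cellRatio * L := by
    intro z
    by_cases hz : act z
    · have := mem_primesIn.1 (pick_of_exists hz).1
      rw [abs_of_nonneg (Real.log_natCast_nonneg _)]
      exact this.2.2
    · rw [ha_not z hz, abs_zero]; positivity
  -- The factors by which `Z` and `H` change satisfy `g * w ^ 9 ≥ 1/3` or `1`, according to whether
  -- a prime is picked; the powers of `1.001` shift the gain `1 / cellRatio` of scale onto `g`.
  let w : ℕ → ℝ := fun z => if act z then 1.001 * 0.896 else 1.001
  let g : ℕ → ℝ := fun z => if act z then 0.896 / 1.001 ^ 9 else 1 / 1.001 ^ 9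
  set M : ℝ := (Fintype.card ι : ℝ) ^ 2 with hM
  have hM0 : 0 < M := by
    have : 0 < Fintype.card ι := Fintype.card_pos
    positivity
  -- The proportion of new collisions, between sums whose new coefficients differ.
  let D : ℕ → ℕ → ℝ := fun y z =>
    (if act z then 2 * cross (s y) (a z) + 2 * cross (s y) (-a z) + cross (s y) (2 * a z) +
      cross (s y) (-2 * a z) else 0) / (9 * M)
  have hw0 : ∀ z, 0 ≤ w z := by intro z; simp only [w]; split_ifs <;> norm_num
  have hg0 : ∀ z, 0 ≤ g z := by intro z; simp only [g]; split_ifs <;> norm_num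
  have hD0 : ∀ y z, 0 ≤ D y z := by
    intro y z
    simp only [D]
    have := cross_nonneg (s y)
    apply div_nonneg _ (by positivity)
    split_ifs
    · linarith [this (a z), this (-a z), this (2 * a z), this (-2 * a z)]
    · exact le_rfl
  have hDsum : ∀ y, ∑ z ∈ Finset.range QB, D y z ≤ (12 / L) * QB := by
    intro y
    have e1 := hsc y 1 (by norm_num)
    have e2 := hsc y (-1) (by norm_num)
    have e3 := hsc y 2 (by norm_num)
    have e4 := hsc y (-2) (by norm_num)
    have e5 : ∑ z ∈ Finset.range QB, D y z =
        (2 * ∑ z ∈ Finset.range QB, (if act z then cross (s y) (1 * a z) else 0) +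
        2 * ∑ z ∈ Finset.range QB, (if act z then cross (s y) (-1 * a z) else 0) +
        ∑ z ∈ Finset.range QB, (if act z then cross (s y) (2 * a z) else 0) +
        ∑ z ∈ Finset.range QB, (if act z then cross (s y) (-2 * a z) else 0)) / (9 * M) := by
      simp only [D]
      rw [← Finset.sum_div]
      congr 1
      simp only [Finset.mul_sum, ← Finset.sum_add_distrib]
      refine Finset.sum_congr rfl (fun z _ => ?_)
      split_ifs
      · simp only [one_mul, neg_mul]
      · simp
    rw [e5, div_le_iff₀ (by positivity)]
    have e6 : 0 ≤ M * (12 / L * (QB : ℝ)) := by positivity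
    simp only [act, a]
    nlinarith
  have hsum_act : ∑ z ∈ Finset.range QB, (if act z then (1 : ℝ) else 0) ≥ 0.0097 * QB := hact
  have hwsum : ∑ z ∈ Finset.range QB, w z ≤ 0.999991 * QB := by
    have e : ∀ z, w z = 1.001 - 1.001 * 0.104 * (if act z then (1 : ℝ) else 0) := by
      intro z; simp only [w]; split_ifs <;> norm_num
    simp only [e]
    rw [Finset.sum_sub_distrib, ← Finset.mul_sum]
    simp only [Finset.sum_const, Finset.card_range, nsmul_eq_mul]
    have : (0 : ℝ) ≤ QB := Nat.cast_nonneg _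
    nlinarith
  have hgsum : cellRatio * ∑ z ∈ Finset.range QB, g z ≤ 0.999991 * QB := by
    have e : ∀ z, g z = (1.001 - 1.001 * 0.104 * (if act z then (1 : ℝ) else 0)) / 1.001 ^ 10 := by
      intro z; simp only [g]; split_ifs <;> norm_num
    simp only [e]
    rw [← Finset.sum_div, hcr, mul_div_cancel₀ _ (by norm_num), Finset.sum_sub_distrib,
      ← Finset.mul_sum]
    simp only [Finset.sum_const, Finset.card_range, nsmul_eq_mul]
    have : (0 : ℝ) ≤ QB := Nat.cast_nonneg _
    nlinarith
  refine ⟨Q * QB, ⟨ι × Fin 3, inferInstance, inferInstance,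
    fun x e => s (x % Q) e.1 + sgn3 e.2 * a (x % QB),
    fun x => H (x % Q) * g (x % QB) + D (x % Q) (x % QB),
    fun x => Z (x % Q) * w (x % QB) + 1,
    by positivity, ?_, ?_, ?_, ?_, ?_, ?_, ?_, ?_⟩⟩
  · intro p hp hd
    rcases (hp.dvd_mul).1 hd with h1 | h1
    · have := primes p hp h1
      exact ⟨this.1, by nlinarith⟩
    · obtain ⟨p', hp', hd'⟩ := (Prime.dvd_finsetProd_iff hp.prime _).1 h1
      have := (Nat.prime_dvd_prime_iff_eq hp (hBp p' hp')).1 hd'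
      subst this
      have := mem_primesIn.1 hp'
      exact ⟨by linarith, this.2.2⟩
  · intro x e
    obtain ⟨d, d', h1, h2, h3, h4, h5⟩ := dvd (x % Q) e.1
    have h2' : d ∣ x := (Nat.dvd_mod_iff h1).1 h2
    have h4' : d' ∣ x := (Nat.dvd_mod_iff h3).1 h4
    have hp1 : pick B (x % QB) ∣ QB := pick_dvd_prod _ _
    have hp2 : pick B (x % QB) ∣ x := (Nat.dvd_mod_iff hp1).1 (pick_dvd _ _)
    have hd0 : (d : ℝ) ≠ 0 := by
      exact_mod_cast (Nat.pos_of_dvd_of_pos h1 pos).ne'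
    have hd0' : (d' : ℝ) ≠ 0 := by
      exact_mod_cast (Nat.pos_of_dvd_of_pos h3 pos).ne'
    have hp0 : (pick B (x % QB) : ℝ) ≠ 0 := by
      exact_mod_cast (Nat.pos_of_dvd_of_pos hp1 hQB0).ne'
    have hc1 : d.Coprime (pick B (x % QB)) := (hcop.coprime_dvd_left h1).coprime_dvd_right hp1
    have hc2 : d'.Coprime (pick B (x % QB)) := (hcop.coprime_dvd_left h3).coprime_dvd_right hp1
    obtain ⟨e1, k⟩ := e
    simp only at h5 ⊢
    rw [h5]
    fin_cases k
    · refine ⟨d, d' * pick B (x % QB), h1.trans (dvd_mul_right _ _), h2', mul_dvd_mul h3 hp1,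
        hc2.mul_dvd_of_dvd_of_dvd h4' hp2, ?_⟩
      push_cast
      rw [Real.log_mul hd0' hp0]
      simp [sgn3, a]
      ring
    · refine ⟨d, d', h1.trans (dvd_mul_right _ _), h2', h3.trans (dvd_mul_right _ _), h4', ?_⟩
      simp [sgn3]
    · refine ⟨d * pick B (x % QB), d', mul_dvd_mul h1 hp1,
        hc1.mul_dvd_of_dvd_of_dvd h2' hp2, h3.trans (dvd_mul_right _ _), h4', ?_⟩
      push_cast
      rw [Real.log_mul hd0 hp0]
      simp [sgn3, a]
      ring
  · rintro x ⟨e, k⟩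
    have h1 := bound (x % Q) e
    have h2 := ha_bd (x % QB)
    have h3 : |sgn3 k * a (x % QB)| ≤ cellRatio * L := by
      rw [abs_mul]
      have : |sgn3 k| ≤ 1 := by fin_cases k <;> simp [sgn3]
      nlinarith [abs_nonneg (a (x % QB))]
    refine (abs_add_le _ _).trans ?_
    nlinarith
  · intro x
    have := mul_nonneg (H_nonneg (x % Q)) (hg0 (x % QB))
    linarith [hD0 (x % Q) (x % QB)]
  · intro x
    have := mul_nonneg (Z_nonneg (x % Q)) (hw0 (x % QB))
    linarith
  · intro x
    rw [cross_extend]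
    generalize x % Q = y
    generalize x % QB = z
    have hZ := Z_nonneg y
    have hH := H_nonneg y
    have hcard : (Fintype.card (ι × Fin 3) : ℝ) ^ 2 = 9 * M := by
      rw [Fintype.card_prod, Fintype.card_fin, hM]; push_cast; ring
    rw [hcard]
    have hC := coll y
    have hw := hw0 z
    have hZw : 0 ≤ Z y * w z := mul_nonneg hZ hw
    have p1 : (Z y * w z) ^ 9 ≤ (Z y * w z + 1) ^ 9 :=
      pow_le_pow_left₀ hZw (by linarith) 9
    have p2 : 1 ≤ (Z y * w z + 1) ^ 9 := one_le_pow₀ (by linarith)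
    have hgw : (if act z then (1 / 3 : ℝ) else 1) ≤ g z * w z ^ 9 := by
      simp only [g, w]; split_ifs <;> norm_num
    have hHZ : 0 ≤ H y * Z y ^ 9 := by positivity
    have q1 : H y * Z y ^ 9 * (if act z then (1 / 3 : ℝ) else 1) + D y z ≤
        (H y * g z + D y z) * (Z y * w z + 1) ^ 9 := by
      have r1 : H y * Z y ^ 9 * (if act z then (1 / 3 : ℝ) else 1) ≤
          H y * g z * (Z y * w z + 1) ^ 9 := by
        calc _ ≤ H y * Z y ^ 9 * (g z * w z ^ 9) := mul_le_mul_of_nonneg_left hgw hHZ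
          _ = H y * g z * (Z y * w z) ^ 9 := by ring
          _ ≤ _ := mul_le_mul_of_nonneg_left p1 (mul_nonneg hH (hg0 z))
      have r2 : D y z ≤ D y z * (Z y * w z + 1) ^ 9 := le_mul_of_one_le_right (hD0 y z) p2
      rw [add_mul]
      linarith
    refine le_trans ?_ (mul_le_mul_of_nonneg_right q1 (by positivity))
    by_cases hz : act z
    · simp only [D, if_pos hz]
      have : ∀ t : ℝ, t / (9 * M) * (9 * M) = t := fun t => by field_simp
      rw [add_mul, this]
      linarith
    · have ha0 := ha_not z hz
      simp only [D, if_neg hz, ha0, mul_zero, neg_zero, mul_one, zero_div, add_zero]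
      linarith
  · rw [sum_crt hcop pos hQB0 (fun y z => H y * g z + D y z)]
    simp only [Finset.sum_add_distrib, ← Finset.mul_sum, ← Finset.sum_mul]
    have h1 : ∑ y ∈ Finset.range Q, ∑ z ∈ Finset.range QB, D y z ≤ Q * ((12 / L) * QB) := by
      refine (Finset.sum_le_sum (fun y _ => hDsum y)).trans ?_
      simp
    have hHs : 0 ≤ ∑ y ∈ Finset.range Q, H y := Finset.sum_nonneg (fun y _ => H_nonneg y)
    have h2 : cellRatio * L * ((∑ y ∈ Finset.range Q, H y) * ∑ z ∈ Finset.range QB, g z) ≤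
        0.999991 * h * (Q * QB) := by
      have e1 : cellRatio * L * ((∑ y ∈ Finset.range Q, H y) * ∑ z ∈ Finset.range QB, g z) =
        (L * ∑ y ∈ Finset.range Q, H y) * (cellRatio * ∑ z ∈ Finset.range QB, g z) := by ring
      have e2 : 0 ≤ L * ∑ y ∈ Finset.range Q, H y := by positivity
      rw [e1]
      calc _ ≤ (L * ∑ y ∈ Finset.range Q, H y) * (0.999991 * QB) :=
            mul_le_mul_of_nonneg_left hgsum e2
        _ ≤ (h * Q) * (0.999991 * QB) := mul_le_mul_of_nonneg_right sum_H (by positivity)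
        _ = _ := by ring
    have h3 : cellRatio * L * (Q * ((12 / L) * QB)) ≤ 13 * (Q * QB) := by
      have e1 : cellRatio * L * (Q * ((12 / L) * QB)) = (12 * cellRatio) * (Q * QB) := by
        field_simp
      rw [e1]
      apply mul_le_mul_of_nonneg_right _ (by positivity)
      linarith
    have h4 : cellRatio * L * ∑ y ∈ Finset.range Q, ∑ z ∈ Finset.range QB, D y z ≤
        cellRatio * L * (Q * ((12 / L) * QB)) :=
      mul_le_mul_of_nonneg_left h1 (by positivity)
    push_cast
    rw [mul_add, add_mul]
    linarith
  · rw [sum_crt hcop pos hQB0 (fun y z => Z y * w z + 1)]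
    simp only [Finset.sum_add_distrib, ← Finset.mul_sum, ← Finset.sum_mul]
    simp only [Finset.sum_const, Finset.card_range, nsmul_eq_mul, mul_one]
    have hZs : 0 ≤ ∑ y ∈ Finset.range Q, Z y := Finset.sum_nonneg (fun y _ => Z_nonneg y)
    have h1 : (∑ y ∈ Finset.range Q, Z y) * ∑ z ∈ Finset.range QB, w z ≤
        (200000 * Q) * (0.999991 * QB) := by
      apply mul_le_mul sum_Z hwsum (Finset.sum_nonneg (fun z _ => hw0 z)) (by positivity)
    push_cast
    have h2 : (0 : ℝ) ≤ Q * QB := by positivity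
    nlinarith

/-- The family with no primes: the empty sum. -/
lemma signedSums_zero {L₀ : ℝ} (h0 : 0 ≤ L₀) : Nonempty (SignedSums 1 L₀ L₀ L₀) := by
  refine ⟨⟨Unit, inferInstance, inferInstance, fun _ _ => 0, fun _ => 1, fun _ => 1, one_pos,
    ?_, ?_, ?_, ?_, ?_, ?_, ?_, ?_⟩⟩
  · intro p hp hd
    exact absurd (Nat.dvd_one.1 hd) hp.one_lt.ne'
  · intro x e
    exact ⟨1, 1, one_dvd _, one_dvd _, one_dvd _, one_dvd _, by simp⟩
  · intro x e
    simp [h0]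
  · intro x; norm_num
  · intro x; norm_num
  · intro x
    simp [cross]
  · simp
  · norm_num

/-- Starting from the trivial family and adjoining cells, the constant in the collision bound
contracts to a number `h` that does not depend on the scale `L₀`. -/
lemma signedSums_exists : ∃ h L₁ : ℝ, 0 < h ∧ 1 ≤ L₁ ∧ ∀ L₀ ≥ L₁, ∃ (Q : ℕ) (Λ : ℝ),
    L₀ ≤ Λ ∧ Nonempty (SignedSums Q L₀ Λ h) := by
  obtain ⟨L₁, h1, hL₁⟩ := cell_active
  -- the fixed point of the contraction
  obtain ⟨c, hc⟩ : ∃ c : ℝ, c = 13 / 0.000009 := ⟨_, rfl⟩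
  have hc' : 0.999991 * c + 13 = c := by rw [hc]; norm_num
  have hc0 : 0 < c := by rw [hc]; norm_num
  refine ⟨1 + c, L₁, by positivity, h1, fun L₀ hL₀ => ?_⟩
  have hL0 : 0 < L₀ := by linarith
  have hcr : 1 ≤ cellRatio := by unfold cellRatio; norm_num
  have key : ∀ m : ℕ, ∃ Q, Nonempty (SignedSums Q L₀ (cellRatio ^ m * L₀)
      (0.999991 ^ m * (L₀ - c) + c)) := by
    intro m
    induction m with
    | zero => exact ⟨1, by simpa using signedSums_zero hL0.le⟩
    | succ m ih =>
      obtain ⟨Q, ⟨S⟩⟩ := ih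
      have hle : L₀ ≤ cellRatio ^ m * L₀ := le_mul_of_one_le_left hL0.le (one_le_pow₀ hcr)
      obtain ⟨Q', hS⟩ := signedSums_step hL₁ hle (by linarith) (by linarith) S
      refine ⟨Q', ?_⟩
      have e1 : cellRatio ^ (m + 1) * L₀ = cellRatio * (cellRatio ^ m * L₀) := by ring
      have e2 : (0.999991 : ℝ) ^ (m + 1) * (L₀ - c) + c
          = 0.999991 * (0.999991 ^ m * (L₀ - c) + c) + 13 := by
        rw [pow_succ]; linear_combination -hc'
      rw [e1, e2]; exact hS
  -- the number of steps depends on `L₀`, the resulting bound does not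
  obtain ⟨m, hm⟩ := exists_pow_lt_of_lt_one (show (0 : ℝ) < 1 / L₀ by positivity)
    (show (0.999991 : ℝ) < 1 by norm_num)
  obtain ⟨Q, ⟨S⟩⟩ := key m
  refine ⟨Q, cellRatio ^ m * L₀, le_mul_of_one_le_left hL0.le (one_le_pow₀ hcr), ⟨?_⟩⟩
  obtain ⟨ι, fin, ne, s, H, Z, pos, primes, dvd, bound, H_nonneg, Z_nonneg, coll, sum_H, sum_Z⟩ := S
  refine ⟨ι, fin, ne, s, H, Z, pos, primes, dvd, bound, H_nonneg, Z_nonneg, coll,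
    sum_H.trans ?_, sum_Z⟩
  apply mul_le_mul_of_nonneg_right _ (Nat.cast_nonneg _)
  rw [lt_div_iff₀ hL0] at hm
  have h3 : 0 < (0.999991 : ℝ) ^ m := by positivity
  nlinarith

/-- Cauchy–Schwarz: few collisions force many distinct integer parts. -/
lemma card_sq_le_cross {ι : Type} [Fintype ι] (f : ι → ℝ) :
    (Fintype.card ι : ℝ) ^ 2 ≤ ((Finset.univ.image fun e => ⌊f e⌋).card : ℝ) * cross f 0 := by
  set V := Finset.univ.image fun e => ⌊f e⌋ with hV
  have hmem : ∀ e, ⌊f e⌋ ∈ V := fun e => Finset.mem_image_of_mem _ (Finset.mem_univ e)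
  have h1 : (Fintype.card ι : ℝ) = ∑ v ∈ V, ∑ e, if ⌊f e⌋ = v then (1 : ℝ) else 0 := by
    rw [Finset.sum_comm]
    simp [hmem]
  have h2 : ∑ v ∈ V, (∑ e, if ⌊f e⌋ = v then (1 : ℝ) else 0) ^ 2 ≤ cross f 0 := by
    calc ∑ v ∈ V, (∑ e, if ⌊f e⌋ = v then (1 : ℝ) else 0) ^ 2
        = ∑ v ∈ V, ∑ e, ∑ e', (if ⌊f e⌋ = v then (1 : ℝ) else 0) *
            (if ⌊f e'⌋ = v then (1 : ℝ) else 0) := by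
          apply Finset.sum_congr rfl
          intro v _
          rw [sq, Finset.sum_mul_sum]
      _ = ∑ e, ∑ e', ∑ v ∈ V, (if ⌊f e⌋ = v then (1 : ℝ) else 0) *
            (if ⌊f e'⌋ = v then (1 : ℝ) else 0) := by
          rw [Finset.sum_comm]
          apply Finset.sum_congr rfl
          intro e _
          rw [Finset.sum_comm]
      _ ≤ cross f 0 := by
          unfold cross
          apply Finset.sum_le_sum; intro e _
          apply Finset.sum_le_sum; intro e' _
          have : ∑ v ∈ V, (if ⌊f e⌋ = v then (1 : ℝ) else 0) *
              (if ⌊f e'⌋ = v then (1 : ℝ) else 0) = if ⌊f e⌋ = ⌊f e'⌋ then 1 else 0 := by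
            simp [hmem]
          rw [this]
          by_cases h : ⌊f e⌋ = ⌊f e'⌋
          · have := Int.abs_sub_lt_one_of_floor_eq_floor h
            rw [if_pos h, if_pos (by rw [add_zero]; exact this.le)]
          · rw [if_neg h]; split_ifs <;> norm_num
  rw [h1]
  refine (sq_sum_le_card_mul_sum_sq).trans ?_
  exact mul_le_mul_of_nonneg_left h2 (Nat.cast_nonneg _)

/-- The logarithms of ratios of divisors of `gcd x Q` have integer parts covering at least `Λ / κ`
integers, and this is witnessed by ratios at most `exp (200 Λ)`. -/
def ManyRatios (Q : ℕ) (Λ κ : ℝ) (x : ℕ) : Prop :=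
  ∃ V : Finset ℤ, Λ ≤ κ * (V.card : ℝ) ∧ ∀ v ∈ V, ∃ d d' : ℕ, d ∣ Q ∧ d ∣ x ∧ d' ∣ Q ∧ d' ∣ x ∧
    (v : ℝ) ≤ Real.log d - Real.log d' ∧ Real.log d - Real.log d' < v + 1 ∧
    |Real.log d - Real.log d'| ≤ 200 * Λ

lemma SignedSums.sum_manyRatios {Q : ℕ} {L₀ Λ h : ℝ} (S : SignedSums Q L₀ Λ h) (hΛ : 0 < Λ)
    (hh : 0 < h) : (Q : ℝ) / 2 ≤ ∑ x ∈ Finset.range Q,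
      if ManyRatios Q Λ (4 * h * 800000 ^ 9) x then (1 : ℝ) else 0 := by
  obtain ⟨ι, fin, ne, s, H, Z, pos, primes, dvd, bound, H_nonneg, Z_nonneg, coll, sum_H, sum_Z⟩ := S
  have key : ∀ x, 1 - (1 / 4) * (Λ * H x / h + Z x / 200000)
      ≤ if ManyRatios Q Λ (4 * h * 800000 ^ 9) x then (1 : ℝ) else 0 := by
    intro x
    have hH := H_nonneg x
    have hZ := Z_nonneg x
    have p1 : 0 ≤ Λ * H x / h := by positivity
    split_ifs with hg
    · have : 0 ≤ Z x / 200000 := by positivity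
      linarith
    by_contra! hlt
    have hH4 : Λ * H x / h ≤ 4 := by have : 0 ≤ Z x / 200000 := by positivity
                                     linarith
    rw [div_le_iff₀ hh] at hH4
    have hZ4 : Z x ≤ 800000 := by linarith
    apply hg
    refine ⟨Finset.univ.image fun e => ⌊s x e⌋, ?_, ?_⟩
    · set v : ℝ := ((Finset.univ.image fun e => ⌊s x e⌋).card : ℝ) with hv
      have hv0 : 0 ≤ v := Nat.cast_nonneg _
      have h1 := (card_sq_le_cross (s x)).trans (mul_le_mul_of_nonneg_left (coll x) hv0)
      have hc : (0 : ℝ) < (Fintype.card ι : ℝ) ^ 2 := by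
        have : 0 < Fintype.card ι := Fintype.card_pos
        positivity
      have h2 : 1 ≤ v * (H x * Z x ^ 9) := by
        refine le_of_mul_le_mul_right ?_ hc
        linarith
      have hZ9 : Z x ^ 9 ≤ 800000 ^ 9 := pow_le_pow_left₀ hZ hZ4 9
      calc Λ = Λ * 1 := (mul_one _).symm
        _ ≤ Λ * (v * (H x * Z x ^ 9)) := mul_le_mul_of_nonneg_left h2 hΛ.le
        _ ≤ Λ * (v * (H x * 800000 ^ 9)) := by gcongr
        _ = Λ * H x * (v * 800000 ^ 9) := by ring
        _ ≤ 4 * h * (v * 800000 ^ 9) := mul_le_mul_of_nonneg_right hH4 (by positivity)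
        _ = 4 * h * 800000 ^ 9 * v := by ring
    · intro v hv
      obtain ⟨e, -, rfl⟩ := Finset.mem_image.1 hv
      obtain ⟨d, d', h1, h2, h3, h4, h5⟩ := dvd x e
      refine ⟨d, d', h1, h2, h3, h4, ?_, ?_, ?_⟩
      · rw [← h5]; exact Int.floor_le _
      · rw [← h5]; exact Int.lt_floor_add_one _
      · rw [← h5]; exact bound x e
  refine le_trans ?_ (Finset.sum_le_sum fun x _ => key x)
  rw [Finset.sum_sub_distrib, ← Finset.mul_sum, Finset.sum_add_distrib, ← Finset.sum_div,
    ← Finset.sum_div, ← Finset.mul_sum]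
  have e1 : Λ * ∑ x ∈ Finset.range Q, H x = (Λ * ∑ x ∈ Finset.range Q, H x) / h * h := by
    field_simp
  have a1 : (Λ * ∑ x ∈ Finset.range Q, H x) / h ≤ Q := by
    rw [div_le_iff₀ hh]; linarith
  have a2 : (∑ x ∈ Finset.range Q, Z x) / 200000 ≤ Q := by
    rw [div_le_iff₀ (by norm_num)]; linarith
  simp only [Finset.sum_const, Finset.card_range, nsmul_eq_mul, mul_one]
  linarith

/-! ### Bridging ratios by a pair of large primes -/

/-- Integer parts of opposite sign are merged, so that the ratios exceed `1`, and the ratios below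
`exp (Λ / (8 κ))` are discarded. At least `Λ / (4 κ)` integer parts remain. -/
lemma ManyRatios.exists_large {Q : ℕ} {Λ κ : ℝ} {x : ℕ} (hx : ManyRatios Q Λ κ x) (hκ : 0 < κ)
    (hΛ : 32 * κ ≤ Λ) : ∃ U : Finset ℕ, Λ ≤ 4 * κ * (U.card : ℝ) ∧ ∀ u ∈ U, ∃ d d' : ℕ,
      d ∣ Q ∧ d ∣ x ∧ d' ∣ Q ∧ d' ∣ x ∧ Λ / (8 * κ) + 2 ≤ Real.log d - Real.log d' ∧
      Real.log d - Real.log d' ≤ 200 * Λ ∧ |Real.log d - Real.log d' - u| ≤ 1 := by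
  obtain ⟨V, hV, hVd⟩ := hx
  obtain ⟨τ, hτ⟩ : ∃ τ : ℝ, τ = Λ / (8 * κ) := ⟨_, rfl⟩
  have hτ' : τ * (8 * κ) = Λ := by rw [hτ]; field_simp
  have hτ4 : 4 ≤ τ := by rw [hτ, le_div_iff₀ (by positivity)]; linarith
  rw [← hτ]
  set I := V.image Int.natAbs with hI
  refine ⟨I.filter fun u : ℕ => τ + 3 < (u : ℝ), ?_, ?_⟩
  · have h1 : V.card ≤ 2 * I.card := by
      apply Finset.card_le_mul_card_image
      intro a _
      refine (Finset.card_le_card (t := {(a : ℤ), -(a : ℤ)}) ?_).trans Finset.card_le_two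
      intro v hv
      rw [Finset.mem_filter] at hv
      simp only [Finset.mem_insert, Finset.mem_singleton]
      omega
    have h2 : I.card ≤ (I.filter fun u : ℕ => τ + 3 < (u : ℝ)).card + (⌊τ + 3⌋₊ + 1) := by
      rw [← Finset.card_filter_add_card_filter_not (s := I) (fun u : ℕ => τ + 3 < (u : ℝ))]
      gcongr
      refine (Finset.card_le_card (t := Finset.range (⌊τ + 3⌋₊ + 1)) ?_).trans
        (Finset.card_range _).le
      intro u hu
      rw [Finset.mem_filter, not_lt] at hu
      rw [Finset.mem_range, Nat.lt_succ_iff]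
      exact Nat.le_floor hu.2
    have h3 : (⌊τ + 3⌋₊ : ℝ) ≤ τ + 3 := Nat.floor_le (by linarith)
    have h1' : (V.card : ℝ) ≤ 2 * I.card := by exact_mod_cast h1
    have h2' : (I.card : ℝ) ≤ ((I.filter fun u : ℕ => τ + 3 < (u : ℝ)).card : ℝ) + (⌊τ + 3⌋₊ + 1) := by
      exact_mod_cast h2
    have h4 : 8 * τ ≤ V.card := by
      apply le_of_mul_le_mul_left _ hκ
      linarith
    have h5 : 2 * τ ≤ ((I.filter fun u : ℕ => τ + 3 < (u : ℝ)).card : ℝ) := by linarith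
    have := mul_le_mul_of_nonneg_left h5 (show 0 ≤ 4 * κ by positivity)
    linarith
  · intro u hu
    rw [Finset.mem_filter, hI, Finset.mem_image] at hu
    obtain ⟨⟨v, hv, rfl⟩, hu⟩ := hu
    obtain ⟨d, d', h1, h2, h3, h4, h5, h6, h7⟩ := hVd v hv
    have h7' := abs_le.1 h7
    rw [Nat.cast_natAbs, Int.cast_abs] at *
    rcases le_or_gt 0 (v : ℝ) with h0 | h0
    · rw [abs_of_nonneg h0] at *
      exact ⟨d, d', h1, h2, h3, h4, by linarith, h7'.2,
        abs_le.2 ⟨by linarith, by linarith⟩⟩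
    · rw [abs_of_neg h0] at *
      exact ⟨d', d, h3, h4, h1, h2, by linarith, by linarith,
        abs_le.2 ⟨by linarith, by linarith⟩⟩

/-- A lower bound for the reciprocal sum over the primes `a` for which `β - log a` is close to one of
the well spaced numbers `t u`: each `u` contributes a window of primes, and a prime lies in at most
four windows. -/
lemma sum_inv_bridge_ge {u₀ : ℝ} (hu₀ : ∀ u ≥ u₀, 1 / (12 * u) ≤
      ∑ p ∈ primesIn u (u + 1.1), (1 / p : ℝ))
    {R τ β : ℝ} (hR : 1 ≤ R) (hRu : u₀ ≤ 5 * R) (hβ : 7 * R < β) (hβ' : β ≤ 7 * R + τ)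
    (U : Finset ℕ) (t : ℕ → ℝ) (ht1 : ∀ u ∈ U, τ + 2 ≤ t u) (ht2 : ∀ u ∈ U, t u ≤ R)
    (ht3 : ∀ u ∈ U, |t u - u| ≤ 1) :
    (U.card : ℝ) / (336 * R) ≤ ∑ a ∈ (primesIn (5 * R) (7 * R)).filter
      (fun a : ℕ => ∃ u ∈ U, |β - Real.log a - t u| ≤ 0.55), (1 / a : ℝ) := by
  set W := (primesIn (5 * R) (7 * R)).filter
      (fun a : ℕ => ∃ u ∈ U, |β - Real.log a - t u| ≤ 0.55) with hW
  have h1 : ∀ u ∈ U, 1 / (84 * R) ≤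
      ∑ a ∈ W, if |β - Real.log a - t u| ≤ 0.55 then (1 / a : ℝ) else 0 := by
    intro u hu
    have e1 := ht1 u hu
    have e2 := ht2 u hu
    have e3 := hu₀ (β - t u - 0.55) (by linarith)
    have hpos : 0 < β - t u - 0.55 := by linarith
    have e4 : 1 / (84 * R) ≤ 1 / (12 * (β - t u - 0.55)) := by
      apply one_div_le_one_div_of_le (by positivity)
      linarith
    refine e4.trans (e3.trans ?_)
    rw [← Finset.sum_filter]
    apply Finset.sum_le_sum_of_subset_of_nonneg
    · intro a ha
      rw [mem_primesIn] at ha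
      have hab : |β - Real.log a - t u| ≤ 0.55 := abs_le.2 ⟨by linarith, by linarith⟩
      rw [Finset.mem_filter, hW, Finset.mem_filter, mem_primesIn]
      exact ⟨⟨⟨ha.1, by linarith, by linarith⟩, u, hu, hab⟩, hab⟩
    · intro a _ _; positivity
  have h2 : ∀ a ∈ W, ∑ u ∈ U, (if |β - Real.log a - t u| ≤ 0.55 then (1 / a : ℝ) else 0)
      ≤ 4 * (1 / a : ℝ) := by
    intro a _
    rw [← Finset.sum_filter, Finset.sum_const, nsmul_eq_mul]
    apply mul_le_mul_of_nonneg_right _ (by positivity)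
    set k := ⌈β - Real.log a - 1.55⌉₊ with hk
    have hcard : (U.filter fun u => |β - Real.log a - t u| ≤ 0.55).card ≤ 4 := by
      refine (Finset.card_le_card (t := Finset.Ico k (k + 4)) ?_).trans (by simp)
      intro u hu
      rw [Finset.mem_filter] at hu
      have e1 := abs_le.1 hu.2
      have e2 := abs_le.1 (ht3 u hu.1)
      have e3 := Nat.le_ceil (β - Real.log a - 1.55)
      rw [← hk] at e3
      rw [Finset.mem_Ico]
      constructor
      · exact Nat.ceil_le.2 (by linarith)
      · have : (u : ℝ) < ((k + 4 : ℕ) : ℝ) := by push_cast; linarith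
        exact_mod_cast this
    exact_mod_cast hcard
  have h3 := Finset.sum_le_sum h1
  rw [Finset.sum_comm, Finset.sum_const, nsmul_eq_mul] at h3
  have h4 := h3.trans (Finset.sum_le_sum h2)
  rw [← Finset.mul_sum] at h4
  have e : (U.card : ℝ) / (336 * R) = (U.card * (1 / (84 * R))) / 4 := by field_simp; ring
  rw [e]; linarith

/-- There are divisors `d`, `d'` of `gcd x P` with `d < d' < 2 d`. -/
def CloseDivisors (P x : ℕ) : Prop :=
  ∃ d d' : ℕ, d ∣ P ∧ d ∣ x ∧ d' ∣ P ∧ d' ∣ x ∧ d < d' ∧ d' < 2 * d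

lemma closeDivisors_of_log {P x D D' : ℕ} (hD : 0 < D) (hD' : 0 < D') (h1 : D ∣ P) (h2 : D ∣ x)
    (h3 : D' ∣ P) (h4 : D' ∣ x) (hne : D ≠ D') (hlog : |Real.log D - Real.log D'| ≤ 0.55) :
    CloseDivisors P x := by
  have h := abs_le.1 hlog
  have key : ∀ {A B : ℕ}, 0 < A → 0 < B → Real.log B - Real.log A ≤ 0.55 → B < 2 * A := by
    intro A B hA hB hAB
    have hA' : (0 : ℝ) < A := by exact_mod_cast hA
    have hB' : (0 : ℝ) < B := by exact_mod_cast hB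
    have l2 := Real.log_two_gt_d9
    have : Real.log B < Real.log (2 * A) := by
      rw [Real.log_mul (by norm_num) hA'.ne']; linarith
    have := (Real.log_lt_log_iff hB' (by positivity)).1 this
    exact_mod_cast this
  rcases lt_or_gt_of_ne hne with hlt | hlt
  · exact ⟨D, D', h1, h2, h3, h4, hlt, key hD hD' (by linarith)⟩
  · exact ⟨D', D, h3, h4, h1, h2, hlt, key hD' hD (by linarith)⟩

/-- `y` modulo `Q` supplies a ratio `d / d'` that is nearly `b / a`, for primes `a` and `b` dividing
the other two residues. The number with these residues has the divisors `b d'` and `a d`. -/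
def Bridged (Q : ℕ) (A B : Finset ℕ) (y z w : ℕ) : Prop :=
  ∃ d d' a b : ℕ, d ∣ Q ∧ d ∣ y ∧ d' ∣ Q ∧ d' ∣ y ∧ b ∈ B ∧ b ∣ z ∧ a ∈ A ∧ a ∣ w ∧
    |Real.log b - Real.log a - (Real.log d - Real.log d')| ≤ 0.55

lemma Bridged.closeDivisors {Q : ℕ} (hQ : 0 < Q) {A B : Finset ℕ} (hA : ∀ a ∈ A, a.Prime)
    (hB : ∀ b ∈ B, b.Prime) (hAQ : ∀ a ∈ A, ¬ a ∣ Q) (hBQ : ∀ b ∈ B, ¬ b ∣ Q)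
    (hAB : ∀ a ∈ A, ∀ b ∈ B, a ≠ b) {x : ℕ}
    (h : Bridged Q A B (x % Q) (x % (∏ b ∈ B, b)) (x % (∏ a ∈ A, a))) :
    CloseDivisors (Q * ((∏ b ∈ B, b) * ∏ a ∈ A, a)) x := by
  obtain ⟨d, d', a, b, h1, h2, h3, h4, h5, h6, h7, h8, h9⟩ := h
  have hbP := Finset.dvd_prod_of_mem (fun b : ℕ => b) h5
  have haP := Finset.dvd_prod_of_mem (fun a : ℕ => a) h7
  rw [Nat.dvd_mod_iff h1] at h2
  rw [Nat.dvd_mod_iff h3] at h4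
  rw [Nat.dvd_mod_iff hbP] at h6
  rw [Nat.dvd_mod_iff haP] at h8
  have ha := hA a h7
  have hb := hB b h5
  have hd := Nat.pos_of_dvd_of_pos h1 hQ
  have hd' := Nat.pos_of_dvd_of_pos h3 hQ
  have c1 : Nat.Coprime d' b :=
    ((Nat.Prime.coprime_iff_not_dvd hb).2 fun h => hBQ b h5 (h.trans h3)).symm
  have c2 : Nat.Coprime d a :=
    ((Nat.Prime.coprime_iff_not_dvd ha).2 fun h => hAQ a h7 (h.trans h1)).symm
  refine closeDivisors_of_log (D := d' * b) (D' := d * a) (Nat.mul_pos hd' hb.pos)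
    (Nat.mul_pos hd ha.pos) (mul_dvd_mul h3 (Dvd.dvd.mul_right hbP _))
    (c1.mul_dvd_of_dvd_of_dvd h4 h6) (mul_dvd_mul h1 (Dvd.dvd.mul_left haP _))
    (c2.mul_dvd_of_dvd_of_dvd h2 h8) ?_ ?_
  · intro he
    have : a ∣ d' * b := he ▸ Dvd.intro_left d rfl
    rcases (Nat.Prime.dvd_mul ha).1 this with h | h
    · exact hAQ a h7 (h.trans h3)
    · exact hAB a h7 b h5 ((Nat.prime_dvd_prime_iff_eq ha hb).1 h)
  · have n1 : (d : ℝ) ≠ 0 := by exact_mod_cast hd.ne'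
    have n2 : (d' : ℝ) ≠ 0 := by exact_mod_cast hd'.ne'
    have n3 : (a : ℝ) ≠ 0 := by exact_mod_cast ha.ne_zero
    have n4 : (b : ℝ) ≠ 0 := by exact_mod_cast hb.ne_zero
    push_cast
    rw [Real.log_mul n2 n4, Real.log_mul n1 n3]
    convert h9 using 2
    ring

lemma prime_dvd_prod {B : Finset ℕ} (hB : ∀ b ∈ B, b.Prime) {p : ℕ} (hp : p.Prime)
    (h : p ∣ ∏ b ∈ B, b) : p ∈ B := by
  obtain ⟨b, hb, hpb⟩ := (Prime.dvd_finsetProd_iff hp.prime _).1 h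
  rwa [(Nat.prime_dvd_prime_iff_eq hp (hB b hb)).1 hpb]

/-- Independence of the residues modulo `Q`, `∏ B` and `∏ A`. -/
lemma sum_bridged_le {Q : ℕ} (hQ : 0 < Q) {A B : Finset ℕ} (hA : ∀ a ∈ A, a.Prime)
    (hB : ∀ b ∈ B, b.Prime) (hAQ : ∀ a ∈ A, ¬ a ∣ Q) (hBQ : ∀ b ∈ B, ¬ b ∣ Q)
    (hAB : ∀ a ∈ A, ∀ b ∈ B, a ≠ b) :
    ∑ y ∈ Finset.range Q, ∑ z ∈ Finset.range (∏ b ∈ B, b), ∑ w ∈ Finset.range (∏ a ∈ A, a),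
      (if Bridged Q A B y z w then (1 : ℝ) else 0) ≤
    ∑ x ∈ Finset.range (Q * ((∏ b ∈ B, b) * ∏ a ∈ A, a)),
      if CloseDivisors (Q * ((∏ b ∈ B, b) * ∏ a ∈ A, a)) x then (1 : ℝ) else 0 := by
  have hA0 : 0 < ∏ a ∈ A, a := Finset.prod_pos fun a ha => (hA a ha).pos
  have hB0 : 0 < ∏ b ∈ B, b := Finset.prod_pos fun a ha => (hB a ha).pos
  have c1 : (∏ b ∈ B, b).Coprime (∏ a ∈ A, a) := by
    refine Nat.Coprime.prod_left fun b hb => Nat.Coprime.prod_right fun a ha => ?_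
    exact (Nat.coprime_primes (hB b hb) (hA a ha)).2 (hAB a ha b hb).symm
  have c2 : Q.Coprime ((∏ b ∈ B, b) * ∏ a ∈ A, a) := by
    refine Nat.Coprime.mul_right (Nat.Coprime.prod_right fun b hb => ?_)
      (Nat.Coprime.prod_right fun a ha => ?_)
    · exact ((Nat.Prime.coprime_iff_not_dvd (hB b hb)).2 (hBQ b hb)).symm
    · exact ((Nat.Prime.coprime_iff_not_dvd (hA a ha)).2 (hAQ a ha)).symm
  have e1 : ∀ y, ∑ z ∈ Finset.range (∏ b ∈ B, b), ∑ w ∈ Finset.range (∏ a ∈ A, a),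
      (if Bridged Q A B y z w then (1 : ℝ) else 0) =
      ∑ v ∈ Finset.range ((∏ b ∈ B, b) * ∏ a ∈ A, a),
        if Bridged Q A B y (v % ∏ b ∈ B, b) (v % ∏ a ∈ A, a) then (1 : ℝ) else 0 := fun y =>
    (sum_crt c1 hB0 hA0 fun z w => if Bridged Q A B y z w then (1 : ℝ) else 0).symm
  rw [Finset.sum_congr rfl fun y _ => e1 y,
    ← sum_crt c2 hQ (Nat.mul_pos hB0 hA0) fun y v =>
      if Bridged Q A B y (v % ∏ b ∈ B, b) (v % ∏ a ∈ A, a) then (1 : ℝ) else 0]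
  apply Finset.sum_le_sum
  intro x _
  rw [Nat.mod_mod_of_dvd _ (dvd_mul_right _ _), Nat.mod_mod_of_dvd _ (dvd_mul_left _ _)]
  by_cases h : Bridged Q A B (x % Q) (x % ∏ b ∈ B, b) (x % ∏ a ∈ A, a)
  · rw [if_pos h, if_pos (h.closeDivisors hQ hA hB hAQ hBQ hAB)]
  · rw [if_neg h]; split_ifs <;> norm_num

/-- On every scale there is a block of primes which alone produces close divisors for a fixed
proportion of the integers. -/
lemma exists_block : ∃ c : ℝ, 0 < c ∧ ∀ s : ℝ, ∃ P : ℕ, 0 < P ∧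
    (∀ p : ℕ, p.Prime → p ∣ P → s < Real.log p) ∧
    c * P ≤ ∑ x ∈ Finset.range P, if CloseDivisors P x then (1 : ℝ) else 0 := by
  obtain ⟨h, L₁, hh, hL₁, hS⟩ := signedSums_exists
  obtain ⟨u₀, hu0, hu₀⟩ := sum_inv_window_ge
  obtain ⟨C, hC, hcell⟩ := sum_inv_cell_ge
  obtain ⟨κ, hκe⟩ : ∃ κ : ℝ, κ = 4 * h * 800000 ^ 9 := ⟨_, rfl⟩
  have hκ : 0 < κ := by rw [hκe]; positivity
  obtain ⟨ρ, hρe⟩ : ∃ ρ : ℝ, ρ = 1 + 1 / (11200 * κ) := ⟨_, rfl⟩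
  have hρ : 1 < ρ := by
    have : 0 < 1 / (11200 * κ) := by positivity
    linarith
  obtain ⟨σ, hσe⟩ : ∃ σ : ℝ, σ = (1 - 1 / ρ) / 2 := ⟨_, rfl⟩
  have hσ : 0 < σ := by
    have : 1 / ρ < 1 := (div_lt_one (by linarith)).2 hρ
    linarith
  obtain ⟨α, hαe⟩ : ∃ α : ℝ, α = 1 / (268800 * κ) := ⟨_, rfl⟩
  have hα : 0 < α := by rw [hαe]; positivity
  obtain ⟨cb, hcb⟩ : ∃ cb : ℝ, cb = 1 - Real.exp (-σ) := ⟨_, rfl⟩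
  obtain ⟨ca, hca⟩ : ∃ ca : ℝ, ca = 1 - Real.exp (-α) := ⟨_, rfl⟩
  have hcb0 : 0 < cb := by
    have := Real.exp_lt_one_iff.2 (neg_lt_zero.2 hσ); linarith
  have hca0 : 0 < ca := by
    have := Real.exp_lt_one_iff.2 (neg_lt_zero.2 hα); linarith
  refine ⟨1 / 2 * cb * ca, by positivity, fun s => ?_⟩
  obtain ⟨L₀, hL₀⟩ : ∃ L₀ : ℝ, L₀ = max (max L₁ s) (max (32 * κ) (max u₀ (C / σ))) := ⟨_, rfl⟩
  have m1 : L₁ ≤ L₀ := by rw [hL₀]; exact (le_max_left _ _).trans (le_max_left _ _)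
  have m2 : s ≤ L₀ := by rw [hL₀]; exact (le_max_right _ _).trans (le_max_left _ _)
  have m3 : 32 * κ ≤ L₀ := by rw [hL₀]; exact (le_max_left _ _).trans (le_max_right _ _)
  have m4 : u₀ ≤ L₀ := by
    rw [hL₀]; exact (le_max_left _ _).trans ((le_max_right _ _).trans (le_max_right _ _))
  have m5 : C / σ ≤ L₀ := by
    rw [hL₀]; exact (le_max_right _ _).trans ((le_max_right _ _).trans (le_max_right _ _))
  obtain ⟨Q, Λ, hΛ, ⟨S⟩⟩ := hS L₀ m1
  have hΛ0 : 0 < Λ := by linarith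
  have hMR := S.sum_manyRatios hΛ0 hh
  rw [← hκe] at hMR
  have hQ := S.pos
  have hQp := S.primes
  clear S
  obtain ⟨R, hR⟩ : ∃ R : ℝ, R = 200 * Λ := ⟨_, rfl⟩
  have hR1 : 1 ≤ R := by linarith
  obtain ⟨τ, hτ⟩ : ∃ τ : ℝ, τ = Λ / (8 * κ) := ⟨_, rfl⟩
  have hρR : ρ * (7 * R) = 7 * R + τ := by rw [hρe, hR, hτ]; field_simp; ring
  obtain ⟨A, hA⟩ : ∃ A, A = primesIn (5 * R) (7 * R) := ⟨_, rfl⟩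
  obtain ⟨B, hB⟩ : ∃ B, B = primesIn (7 * R) (ρ * (7 * R)) := ⟨_, rfl⟩
  have hAm : ∀ a ∈ A, a.Prime ∧ 5 * R < Real.log a ∧ Real.log a ≤ 7 * R := fun a ha =>
    mem_primesIn.1 (hA ▸ ha)
  have hBm : ∀ b ∈ B, b.Prime ∧ 7 * R < Real.log b ∧ Real.log b ≤ 7 * R + τ := fun b hb => by
    rw [hB, mem_primesIn, hρR] at hb; exact hb
  have hAQ : ∀ a ∈ A, ¬ a ∣ Q := fun a ha hd => by
    have h1 := (hQp a (hAm a ha).1 hd).2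
    have h2 := (hAm a ha).2.1
    linarith
  have hBQ : ∀ a ∈ B, ¬ a ∣ Q := fun a ha hd => by
    have h1 := (hQp a (hBm a ha).1 hd).2
    have h2 := (hBm a ha).2.1
    linarith
  have hAB : ∀ a ∈ A, ∀ b ∈ B, a ≠ b := fun a ha b hb hab => by
    have h1 := (hAm a ha).2.2
    have h2 := (hBm b hb).2.1
    rw [hab] at h1
    linarith
  have hAp : ∀ a ∈ A, a.Prime := fun a ha => (hAm a ha).1
  have hBp : ∀ a ∈ B, a.Prime := fun a ha => (hBm a ha).1
  have hA0 : 0 < ∏ a ∈ A, a := Finset.prod_pos fun a ha => (hAp a ha).pos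
  have hB0 : 0 < ∏ b ∈ B, b := Finset.prod_pos fun a ha => (hBp a ha).pos
  refine ⟨Q * ((∏ b ∈ B, b) * ∏ a ∈ A, a), Nat.mul_pos hQ (Nat.mul_pos hB0 hA0), ?_, ?_⟩
  · intro p hp hd
    rcases (Nat.Prime.dvd_mul hp).1 hd with hd | hd
    · have := (hQp p hp hd).1; linarith
    rcases (Nat.Prime.dvd_mul hp).1 hd with hd | hd
    · have := (hBm p (prime_dvd_prod hBp hp hd)).2.1; linarith
    · have := (hAm p (prime_dvd_prod hAp hp hd)).2.1; linarith
  refine le_trans ?_ (sum_bridged_le hQ hAp hBp hAQ hBQ hAB)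
  -- the residues modulo `∏ B` that have a divisor in `B`
  have hBsum : cb * (∏ b ∈ B, b : ℕ) ≤
      ∑ z ∈ Finset.range (∏ b ∈ B, b), if ∃ b ∈ B, b ∣ z then (1 : ℝ) else 0 := by
    refine le_trans ?_ (sum_exists_dvd_ge B hBp dvd_rfl)
    rw [mul_comm]
    apply mul_le_mul_of_nonneg_left _ (Nat.cast_nonneg _)
    have h1 := hcell (7 * R) ρ (by linarith) hρ.le
    rw [← hB] at h1
    have h2 : C / (7 * R) ≤ σ := by
      rw [div_le_iff₀ (by linarith)]
      rw [div_le_iff₀ hσ] at m5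
      have : L₀ * σ ≤ 7 * R * σ := mul_le_mul_of_nonneg_right (by linarith) hσ.le
      linarith
    have h3 : Real.exp (-∑ p ∈ B, (1 / p : ℝ)) ≤ Real.exp (-σ) :=
      Real.exp_le_exp.2 (by linarith)
    linarith
  -- for a fixed ratio set and a fixed `b`, the residues modulo `∏ A` completing the bridge
  have hAsum : ∀ y z, ManyRatios Q Λ κ y → (∃ b ∈ B, b ∣ z) → ca * (∏ a ∈ A, a : ℕ) ≤
      ∑ w ∈ Finset.range (∏ a ∈ A, a), if Bridged Q A B y z w then (1 : ℝ) else 0 := by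
    rintro y z hy ⟨b, hb, hbz⟩
    obtain ⟨U, hU, hUd⟩ := hy.exists_large hκ (by linarith)
    choose! d d' h1 h2 h3 h4 h5 h6 h7 using hUd
    rw [← hτ] at h5
    have hbb := hBm b hb
    have hsum := sum_inv_bridge_ge hu₀ hR1 (by linarith) hbb.2.1 hbb.2.2 U
      (fun u => Real.log (d u) - Real.log (d' u)) h5 (fun u hu => by rw [hR]; exact h6 u hu) h7
    rw [← hA] at hsum
    set W := A.filter fun a : ℕ => ∃ u ∈ U,
      |Real.log b - Real.log a - (Real.log (d u) - Real.log (d' u))| ≤ 0.55 with hW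
    have hWA : W ⊆ A := Finset.filter_subset _ _
    have hα' : α ≤ (U.card : ℝ) / (336 * R) := by
      rw [hαe, div_le_div_iff₀ (by positivity) (by positivity), hR]
      nlinarith
    refine le_trans ?_ ((sum_exists_dvd_ge W (fun p hp => hAp p (hWA hp))
      (Finset.prod_dvd_prod_of_subset W A (fun p => p) hWA)).trans ?_)
    · rw [mul_comm]
      apply mul_le_mul_of_nonneg_left _ (Nat.cast_nonneg _)
      have h3 : Real.exp (-∑ p ∈ W, (1 / p : ℝ)) ≤ Real.exp (-α) :=
        Real.exp_le_exp.2 (by linarith)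
      linarith
    · apply Finset.sum_le_sum
      intro w _
      by_cases hw : ∃ p ∈ W, p ∣ w
      · rw [if_pos hw, if_pos]
        obtain ⟨a, haW, haw⟩ := hw
        obtain ⟨haA, u, hu, hub⟩ := Finset.mem_filter.1 haW
        exact ⟨d u, d' u, a, b, h1 u hu, h2 u hu, h3 u hu, h4 u hu, hb, hbz, haA, haw, hub⟩
      · rw [if_neg hw]; split_ifs <;> norm_num
  have hz : ∀ y, (if ManyRatios Q Λ κ y then (1 : ℝ) else 0) *
      (cb * (∏ b ∈ B, b : ℕ) * (ca * (∏ a ∈ A, a : ℕ))) ≤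
      ∑ z ∈ Finset.range (∏ b ∈ B, b), ∑ w ∈ Finset.range (∏ a ∈ A, a),
        (if Bridged Q A B y z w then (1 : ℝ) else 0) := by
    intro y
    split_ifs with hy
    · rw [one_mul]
      refine (mul_le_mul_of_nonneg_right hBsum (by positivity)).trans ?_
      rw [Finset.sum_mul]
      apply Finset.sum_le_sum
      intro z _
      split_ifs with hzB
      · rw [one_mul]; exact hAsum y z hy hzB
      · rw [zero_mul]
        exact Finset.sum_nonneg fun w _ => by split_ifs <;> norm_num
    · rw [zero_mul]
      exact Finset.sum_nonneg fun z _ => Finset.sum_nonneg fun w _ => by split_ifs <;> norm_num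
  refine le_trans ?_ (Finset.sum_le_sum fun y _ => hz y)
  rw [← Finset.sum_mul]
  refine le_trans (le_of_eq ?_) (mul_le_mul_of_nonneg_right hMR (by positivity))
  push_cast
  ring

/-! ### Independent blocks and the density -/

lemma sum_not_closeDivisors (P : ℕ) :
    ∑ x ∈ Finset.range P, (if CloseDivisors P x then (0 : ℝ) else 1) =
      P - ∑ x ∈ Finset.range P, if CloseDivisors P x then (1 : ℝ) else 0 := by
  rw [eq_sub_iff_add_eq, ← Finset.sum_add_distrib]
  rw [Finset.sum_congr rfl (g := fun _ => (1 : ℝ)) fun x _ => by split_ifs <;> norm_num]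
  simp

/-- Blocks at increasing scales are coprime, so the proportions of integers missed by each of them
multiply. -/
lemma exists_sum_not_closeDivisors_le {ε : ℝ} (hε : 0 < ε) : ∃ Q : ℕ, 0 < Q ∧
    ∑ x ∈ Finset.range Q, (if CloseDivisors Q x then (0 : ℝ) else 1) ≤ ε * Q := by
  obtain ⟨c, hc, hblock⟩ := exists_block
  have hnn : ∀ P : ℕ, 0 ≤ ∑ x ∈ Finset.range P, (if CloseDivisors P x then (0 : ℝ) else 1) :=
    fun P => Finset.sum_nonneg fun x _ => by split_ifs <;> norm_num
  have key : ∀ r : ℕ, ∃ Q : ℕ, 0 < Q ∧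
      ∑ x ∈ Finset.range Q, (if CloseDivisors Q x then (0 : ℝ) else 1) ≤ (1 - c) ^ r * Q := by
    intro r
    induction r with
    | zero =>
      refine ⟨1, one_pos, ?_⟩
      simp only [Finset.range_one, Finset.sum_singleton]
      split_ifs <;> norm_num
    | succ r ih =>
      obtain ⟨Q, hQ, hQb⟩ := ih
      obtain ⟨P, hP, hPp, hPb⟩ := hblock (Real.log Q)
      refine ⟨Q * P, Nat.mul_pos hQ hP, ?_⟩
      have hcop : Q.Coprime P := by
        refine Nat.Coprime.symm (Nat.Coprime.symm (Nat.coprime_of_dvd fun p hp hpQ hpP => ?_))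
        have h1 := hPp p hp hpP
        have h2 : Real.log p ≤ Real.log Q :=
          Real.log_le_log (by exact_mod_cast hp.pos) (by exact_mod_cast Nat.le_of_dvd hQ hpQ)
        linarith
      have hPb' : ∑ x ∈ Finset.range P, (if CloseDivisors P x then (0 : ℝ) else 1)
          ≤ (1 - c) * P := by
        rw [sum_not_closeDivisors]; linarith
      calc ∑ x ∈ Finset.range (Q * P), (if CloseDivisors (Q * P) x then (0 : ℝ) else 1)
          ≤ ∑ x ∈ Finset.range (Q * P), (if CloseDivisors Q (x % Q) then (0 : ℝ) else 1) *
              (if CloseDivisors P (x % P) then (0 : ℝ) else 1) := by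
            apply Finset.sum_le_sum
            intro x _
            by_cases hx : CloseDivisors (Q * P) x
            · rw [if_pos hx]; positivity
            · rw [if_neg hx, if_neg, if_neg, one_mul]
              · rintro ⟨d, d', h1, h2, h3, h4, h5⟩
                exact hx ⟨d, d', h1.mul_left _, (Nat.dvd_mod_iff h1).1 h2, h3.mul_left _,
                  (Nat.dvd_mod_iff h3).1 h4, h5⟩
              · rintro ⟨d, d', h1, h2, h3, h4, h5⟩
                exact hx ⟨d, d', h1.mul_right _, (Nat.dvd_mod_iff h1).1 h2, h3.mul_right _,
                  (Nat.dvd_mod_iff h3).1 h4, h5⟩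
        _ = (∑ x ∈ Finset.range Q, (if CloseDivisors Q x then (0 : ℝ) else 1)) *
              ∑ x ∈ Finset.range P, (if CloseDivisors P x then (0 : ℝ) else 1) := by
            rw [sum_crt hcop hQ hP fun y z => (if CloseDivisors Q y then (0 : ℝ) else 1) *
              (if CloseDivisors P z then (0 : ℝ) else 1), Finset.sum_mul_sum]
        _ ≤ ((1 - c) ^ r * Q) * ((1 - c) * P) :=
            mul_le_mul hQb hPb' (hnn P) ((hnn Q).trans hQb)
        _ = (1 - c) ^ (r + 1) * ((Q * P : ℕ) : ℝ) := by push_cast; ring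
  have hc1 : 0 ≤ 1 - c := by
    obtain ⟨P, hP, -, hPb⟩ := hblock 0
    have h1 := hnn P
    rw [sum_not_closeDivisors] at h1
    have : (0 : ℝ) < P := by exact_mod_cast hP
    by_contra! hlt
    nlinarith
  obtain ⟨r, hr⟩ := exists_pow_lt_of_lt_one hε (show 1 - c < 1 by linarith)
  obtain ⟨Q, hQ, hQb⟩ := key r
  exact ⟨Q, hQ, hQb.trans (mul_le_mul_of_nonneg_right hr.le (Nat.cast_nonneg _))⟩

theorem density_of_integers_with_close_divisors :
    HasDensity {n : ℕ | ∃ d d' : ℕ, d ∣ n ∧ d' ∣ n ∧ d < d' ∧ d' < 2 * d} 1 := by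
  set S := {n : ℕ | ∃ d d' : ℕ, d ∣ n ∧ d' ∣ n ∧ d < d' ∧ d' < 2 * d} with hS
  have hcount : ∀ N, (countIn S N : ℝ) = N - ∑ n ∈ Finset.Icc 1 N, if n ∈ S then (0 : ℝ) else 1 := by
    intro N
    rw [countIn, eq_sub_iff_add_eq, Finset.card_filter]
    push_cast
    rw [← Finset.sum_add_distrib,
      Finset.sum_congr rfl (g := fun _ => (1 : ℝ)) fun x _ => by split_ifs <;> norm_num]
    simp
  rw [HasDensity, tendsto_order]
  constructor
  · intro a ha
    obtain ⟨Q, hQ, hQb⟩ := exists_sum_not_closeDivisors_le (show 0 < (1 - a) / 2 by linarith)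
    filter_upwards [eventually_gt_atTop Q] with N hN
    have hN0 : (0 : ℝ) < N := by exact_mod_cast hQ.trans hN
    have hNQ : (Q : ℝ) < N := by exact_mod_cast hN
    have h1 : ∑ n ∈ Finset.Icc 1 N, (if n ∈ S then (0 : ℝ) else 1) ≤
        ((N / Q + 1 : ℕ) : ℝ) * ((1 - a) / 2 * Q) := by
      calc ∑ n ∈ Finset.Icc 1 N, (if n ∈ S then (0 : ℝ) else 1)
          ≤ ∑ n ∈ Finset.Icc 1 N, (if CloseDivisors Q (n % Q) then (0 : ℝ) else 1) := by
            apply Finset.sum_le_sum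
            intro n _
            by_cases hn : CloseDivisors Q (n % Q)
            · rw [if_pos hn, if_pos]
              obtain ⟨d, d', h1, h2, h3, h4, h5⟩ := hn
              exact ⟨d, d', (Nat.dvd_mod_iff h1).1 h2, (Nat.dvd_mod_iff h3).1 h4, h5⟩
            · rw [if_neg hn]; split_ifs <;> norm_num
        _ ≤ ∑ n ∈ Finset.range (Q * (N / Q + 1)),
              (if CloseDivisors Q (n % Q) then (0 : ℝ) else 1) := by
            apply Finset.sum_le_sum_of_subset_of_nonneg
            · intro n hn
              rw [Finset.mem_Icc] at hn
              exact Finset.mem_range.2 (hn.2.trans_lt (Nat.lt_mul_div_succ N hQ))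
            · intro n _ _; split_ifs <;> norm_num
        _ = ((N / Q + 1 : ℕ) : ℝ) *
              ∑ n ∈ Finset.range Q, (if CloseDivisors Q n then (0 : ℝ) else 1) :=
            sum_mod Q _ fun n => if CloseDivisors Q n then (0 : ℝ) else 1
        _ ≤ _ := mul_le_mul_of_nonneg_left hQb (Nat.cast_nonneg _)
    have h2 : ((N / Q + 1 : ℕ) : ℝ) * Q ≤ N + Q := by
      have := Nat.div_mul_le_self N Q
      have h : (N / Q + 1) * Q ≤ N + Q := by rw [add_mul, one_mul]; omega
      exact_mod_cast h
    rw [hcount, lt_div_iff₀ hN0]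
    nlinarith
  · intro a ha
    refine Eventually.of_forall fun N => lt_of_le_of_lt ?_ ha
    refine div_le_one_of_le₀ ?_ (Nat.cast_nonneg _)
    rw [hcount]
    have : 0 ≤ ∑ n ∈ Finset.Icc 1 N, (if n ∈ S then (0 : ℝ) else 1) :=
      Finset.sum_nonneg fun n _ => by split_ifs <;> norm_num
    linarith
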